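/- arXiv:1611.10315 — 2 statements merged into one kernel-verified Lean document; each statement's English description precedes it below -/
import Mathlib

section
/- Let F be a finite family of graphs that contains a bipartite graph, a co-bipartite graph and a split graph. Then the property P*_F of being induced F-free is easily testable; that is, there exists a constant c > 0 such that for every ε ∈ (0,1/2) and every graph G that has at least ε^{-c} vertices and is ε-far from being induced F-free, at least a 2/3-fraction of the ⌈ε^{-c}⌉-element vertex subsets of G induce a subgraph that is not induced F-free. -/
open scoped Classical
open Finset

noncomputable section

/-- Number of unordered vertex pairs on which two graphs on the same vertex set differ. -/
def editDist {n : ℕ} (G H : SimpleGraph (Fin n)) : ℕ :=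
  Set.ncard {e : Sym2 (Fin n) | (e ∈ G.edgeSet ∧ e ∉ H.edgeSet) ∨ (e ∉ G.edgeSet ∧ e ∈ H.edgeSet)}

/-- `G` is `ε`-far from satisfying the graph property `P`. -/
def Far (P : ∀ n : ℕ, Set (SimpleGraph (Fin n))) {n : ℕ} (G : SimpleGraph (Fin n)) (ε : ℝ) : Prop :=
  ∀ H : SimpleGraph (Fin n), H ∈ P n → ε * (n : ℝ) ^ 2 ≤ (editDist G H : ℝ)

/-- The subgraph induced by a vertex subset `Q` of size `m`, as a graph on `Fin m`. -/
def inducedOn {n : ℕ} (G : SimpleGraph (Fin n)) {m : ℕ} (Q : Finset (Fin n))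
    (h : Q.card = m) : SimpleGraph (Fin m) :=
  G.comap fun i => ((Q.orderIsoOfFin h) i : Fin n)

/-- A graph property is easily testable if for some constant `c > 0`, for every `ε ∈ (0,1/2)`
and every graph on at least `ε ^ (-c)` vertices which is `ε`-far from `P`, at least a
`2/3`-fraction of the `⌈ε ^ (-c)⌉`-element vertex subsets induce a subgraph not satisfying `P`. -/
def EasilyTestable (P : ∀ n : ℕ, Set (SimpleGraph (Fin n))) : Prop :=
  ∃ c : ℝ, 0 < c ∧ ∀ ε : ℝ, 0 < ε → ε < 1 / 2 → ∀ n : ℕ, ∀ G : SimpleGraph (Fin n),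
    ε ^ (-c) ≤ (n : ℝ) → Far P G ε →
    (2 / 3 : ℝ) * (((Finset.univ : Finset (Fin n)).powersetCard ⌈ε ^ (-c)⌉₊).card : ℝ) ≤
      ((((Finset.univ : Finset (Fin n)).powersetCard ⌈ε ^ (-c)⌉₊).filter
        fun Q => ∃ h : Q.card = ⌈ε ^ (-c)⌉₊, inducedOn G Q h ∉ P ⌈ε ^ (-c)⌉₊).card : ℝ)

/-- The property of being induced `𝓕`-free. -/
def InducedFree (𝓕 : Set (Σ k : ℕ, SimpleGraph (Fin k))) : ∀ n : ℕ, Set (SimpleGraph (Fin n)) :=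
  fun n => {G | ∀ p ∈ 𝓕, IsEmpty (p.2 ↪g G)}

/-- A graph is bipartite: its vertex set can be partitioned into two independent sets. -/
def IsBipGraph {V : Type*} (H : SimpleGraph V) : Prop :=
  ∃ A : Set V, (∀ u ∈ A, ∀ v ∈ A, ¬ H.Adj u v) ∧ (∀ u ∉ A, ∀ v ∉ A, ¬ H.Adj u v)

/-- A graph is co-bipartite: its vertex set can be partitioned into two cliques. -/
def IsCoBipGraph {V : Type*} (H : SimpleGraph V) : Prop :=
  ∃ A : Set V, (∀ u ∈ A, ∀ v ∈ A, u ≠ v → H.Adj u v) ∧ (∀ u ∉ A, ∀ v ∉ A, u ≠ v → H.Adj u v)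

/-- A graph is split: its vertex set can be partitioned into a clique and an independent set. -/
def IsSplitGraph {V : Type*} (H : SimpleGraph V) : Prop :=
  ∃ A : Set V, (∀ u ∈ A, ∀ v ∈ A, u ≠ v → H.Adj u v) ∧ (∀ u ∉ A, ∀ v ∉ A, ¬ H.Adj u v)

/-!
A *type* is a clique or an independent set. The three hypotheses say that for any two types some
member of `𝓕` splits into two parts of these types. By the Sauer–Shelah lemma and Ramsey's theorem,
an induced `𝓕`-free graph on `β ⊕ α` therefore has only polynomially many traces of `β` on `α`:
a large shattered set would yield one shattered homogeneously, hence a copy of a member of `𝓕`.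

If `G` contains few copies of members of `𝓕`, then a random sample of vertices is induced
`𝓕`-free, so it has few traces. This leaves no room for many vertices with pairwise far
neighbourhoods, and the vertices fall into polynomially many clusters of close neighbourhoods. Take
a coarse clustering and a much finer one, and choose a random representative of each coarse cluster.
Replace each representative by a random sample of bounded size from its fine cluster. The result is
still induced `𝓕`-free, its adjacencies between distinct clusters are those of the representatives,
and by Ramsey's theorem each sample contains a large homogeneous set. Hence the graph which joins
clusters as their representatives and makes each cluster homogeneous of the type found is induced
`𝓕`-free, and it is close to `G`: this is a polynomial induced removal lemma. A graph far from being
induced `𝓕`-free thus contains a member of `𝓕` with polynomial density, and a random vertex subset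
of polynomial size contains many independent samples, one of which is a copy of it.
-/

open scoped BigOperators

section Averages

variable {α β : Type*} {s t : Finset α} {P Q : α → Prop}

/-- The probability that a uniformly random element of `s` satisfies `P`; it is `0` if `s` is
empty. -/
def uniformProb (s : Finset α) (P : α → Prop) : ℝ := 𝔼 x ∈ s, if P x then 1 else 0

lemma uniformProb_eq_expect (s : Finset α) (P : α → Prop) [DecidablePred P] :
    uniformProb s P = 𝔼 x ∈ s, if P x then 1 else 0 := by
  rw [uniformProb]
  congr!

lemma uniformProb_eq_div_card (s : Finset α) (P : α → Prop) [DecidablePred P] :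
    uniformProb s P = #{x ∈ s | P x} / #s := by
  rw [uniformProb_eq_expect, expect_eq_sum_div_card, sum_boole]

lemma uniformProb_nonneg : 0 ≤ uniformProb s P :=
  expect_nonneg fun x _ => by positivity

lemma uniformProb_le_one : uniformProb s P ≤ 1 := by
  rw [uniformProb_eq_div_card]
  exact div_le_one_of_le₀ (by exact_mod_cast card_filter_le s P) (Nat.cast_nonneg _)

lemma uniformProb_mono (h : ∀ x ∈ s, P x → Q x) : uniformProb s P ≤ uniformProb s Q :=
  expect_le_expect fun x hx => by
    by_cases hP : P x
    · simp only [hP, h x hx hP, le_refl]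
    · simp only [hP, if_false]; positivity

lemma uniformProb_exists_le {ι : Type*} (I : Finset ι) (P : ι → α → Prop) :
    uniformProb s (fun x => ∃ i ∈ I, P i x) ≤ ∑ i ∈ I, uniformProb s (P i) := by
  simp only [uniformProb]
  rw [← expect_sum_comm]
  refine expect_le_expect fun x _ => ?_
  split_ifs with h
  · obtain ⟨i, hi, hP⟩ := h
    calc (1 : ℝ) = if P i x then 1 else 0 := (if_pos hP).symm
      _ ≤ ∑ j ∈ I, if P j x then (1 : ℝ) else 0 :=
        single_le_sum (f := fun j => if P j x then (1 : ℝ) else 0)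
          (fun j _ => by positivity) hi
  · positivity

lemma uniformProb_or_le (P Q : α → Prop) :
    uniformProb s (fun x => P x ∨ Q x) ≤ uniformProb s P + uniformProb s Q := by
  simp only [uniformProb]
  rw [← expect_add_distrib]
  refine expect_le_expect fun x _ => ?_
  by_cases hP : P x <;> by_cases hQ : Q x <;> simp [hP, hQ]

lemma exists_not_of_uniformProb_lt_one (hs : s.Nonempty) (h : uniformProb s P < 1) :
    ∃ x ∈ s, ¬ P x := by
  obtain ⟨x, hx, hlt⟩ := exists_lt_of_expect_lt hs h
  refine ⟨x, hx, fun hP => ?_⟩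
  simp only [hP, if_true, lt_irrefl] at hlt

lemma uniformProb_le_mul_of_card_le {c : ℝ} (hst : s ⊆ t) (ht : t.Nonempty)
    (hcard : (#t : ℝ) ≤ c * #s) : uniformProb s P ≤ c * uniformProb t P := by
  have ht0 : (0 : ℝ) < #t := by exact_mod_cast ht.card_pos
  have hs0 : (0 : ℝ) < #s := by
    rcases s.eq_empty_or_nonempty with rfl | hs
    · simp only [card_empty, CharP.cast_eq_zero, mul_zero] at hcard; linarith
    · exact_mod_cast hs.card_pos
  have hfilter : (#{x ∈ s | P x} : ℝ) ≤ #{x ∈ t | P x} := by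
    exact_mod_cast card_le_card (filter_subset_filter P hst)
  rw [uniformProb_eq_div_card, uniformProb_eq_div_card, mul_div_assoc', div_le_div_iff₀ hs0 ht0]
  calc (#{x ∈ s | P x} : ℝ) * #t ≤ #{x ∈ t | P x} * (c * #s) := by gcongr
    _ = c * #{x ∈ t | P x} * #s := by ring

lemma expect_le_add_mul_uniformProb {f : α → ℝ} {B M : ℝ} (hs : s.Nonempty) (hB : 0 ≤ B)
    (hfM : ∀ x ∈ s, f x ≤ M) (hfB : ∀ x ∈ s, ¬ P x → f x ≤ B) :
    𝔼 x ∈ s, f x ≤ B + M * uniformProb s P := by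
  calc 𝔼 x ∈ s, f x ≤ 𝔼 x ∈ s, (B + M * if P x then 1 else 0) :=
        expect_le_expect fun x hx => by
          by_cases hP : P x
          · simp only [hP, if_true]; linarith [hfM x hx]
          · simp only [hP, if_false]; linarith [hfB x hx hP]
    _ = B + M * uniformProb s P := by
        rw [expect_add_distrib, expect_const hs, ← mul_expect, uniformProb]

lemma exists_le_two_mul_of_expect_le {f g : α → ℝ} {a b : ℝ} (hs : s.Nonempty)
    (hf : ∀ x ∈ s, 0 ≤ f x) (hg : ∀ x ∈ s, 0 ≤ g x) (ha : 0 < a) (hb : 0 < b)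
    (hfa : 𝔼 x ∈ s, f x ≤ a) (hgb : 𝔼 x ∈ s, g x ≤ b) :
    ∃ x ∈ s, f x ≤ 2 * a ∧ g x ≤ 2 * b := by
  have hsum : 𝔼 x ∈ s, (f x / a + g x / b) ≤ 2 := by
    rw [expect_add_distrib, ← expect_div, ← expect_div]
    have := (div_le_one ha).2 hfa
    have := (div_le_one hb).2 hgb
    linarith
  obtain ⟨x, hx, hle⟩ := exists_le_of_expect_le hs hsum
  refine ⟨x, hx, ?_, ?_⟩
  · rw [← div_le_iff₀ ha]
    linarith [div_nonneg (hg x hx) hb.le]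
  · rw [← div_le_iff₀ hb]
    linarith [div_nonneg (hf x hx) ha.le]

end Averages

section Resampling

variable {ι κ V : Type*} [Fintype ι] [DecidableEq ι] [Fintype κ] [DecidableEq κ]

lemma extend_mem_piFinset {S : ι → Finset V} {σ : κ → ι} (hσ : σ.Injective) {x : ι → V}
    {y : κ → V} (hx : x ∈ Fintype.piFinset S) (hy : y ∈ Fintype.piFinset fun k => S (σ k)) :
    Function.extend σ y x ∈ Fintype.piFinset S := by
  rw [Fintype.mem_piFinset] at hx hy ⊢
  intro i
  by_cases h : ∃ k, σ k = i
  · obtain ⟨k, rfl⟩ := h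
    rw [hσ.extend_apply]
    exact hy k
  · rw [Function.extend_apply' _ _ _ h]
    exact hx i

lemma expect_piFinset_resample {S : ι → Finset V} (hS : ∀ i, (S i).Nonempty) {σ : κ → ι}
    (hσ : σ.Injective) (f : (ι → V) → ℝ) :
    𝔼 x ∈ Fintype.piFinset S, f x =
      𝔼 x ∈ Fintype.piFinset S, 𝔼 y ∈ Fintype.piFinset fun k => S (σ k),
        f (Function.extend σ y x) := by
  have hne : (Fintype.piFinset fun k => S (σ k)).Nonempty :=
    Fintype.piFinset_nonempty.2 fun k => hS (σ k)
  have hcomp : ∀ x ∈ Fintype.piFinset S, x ∘ σ ∈ Fintype.piFinset fun k => S (σ k) :=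
    fun x hx => Fintype.mem_piFinset.2 fun k => Fintype.mem_piFinset.1 hx (σ k)
  let swap : (ι → V) × (κ → V) → (ι → V) × (κ → V) :=
    fun z => (Function.extend σ z.2 z.1, z.1 ∘ σ)
  have hswap : ∀ z, swap (swap z) = z := by
    rintro ⟨x, y⟩
    refine Prod.ext (funext fun i => ?_) (funext fun k => hσ.extend_apply _ _ k)
    by_cases h : ∃ k, σ k = i
    · obtain ⟨k, rfl⟩ := h
      exact hσ.extend_apply _ _ k
    · simp only [swap, Function.extend_apply' _ _ _ h]
  have hmaps : ∀ z ∈ Fintype.piFinset S ×ˢ Fintype.piFinset (fun k => S (σ k)),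
      swap z ∈ Fintype.piFinset S ×ˢ Fintype.piFinset (fun k => S (σ k)) := fun z hz => by
    rw [mem_product] at hz ⊢
    exact ⟨extend_mem_piFinset hσ hz.1 hz.2, hcomp _ hz.1⟩
  calc 𝔼 x ∈ Fintype.piFinset S, f x
      = 𝔼 z ∈ Fintype.piFinset S ×ˢ Fintype.piFinset (fun k => S (σ k)), f z.1 := by
        rw [expect_product]
        exact expect_congr rfl fun x _ => (expect_const hne _).symm
    _ = 𝔼 z ∈ Fintype.piFinset S ×ˢ Fintype.piFinset (fun k => S (σ k)), f (swap z).1 :=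
        expect_nbij' swap swap hmaps hmaps (fun z _ => hswap z) (fun z _ => hswap z)
          fun z _ => by rw [hswap]
    _ = _ := expect_product _ _ _

lemma expect_piFinset_comp {S : ι → Finset V} (hS : ∀ i, (S i).Nonempty) {σ : κ → ι}
    (hσ : σ.Injective) (g : (κ → V) → ℝ) :
    𝔼 x ∈ Fintype.piFinset S, g (x ∘ σ) = 𝔼 y ∈ Fintype.piFinset fun k => S (σ k), g y := by
  rw [expect_piFinset_resample hS hσ]
  simp only [Function.extend_comp hσ]
  exact expect_const (Fintype.piFinset_nonempty.2 hS) _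

lemma expect_piFinset_update {S : ι → Finset V} (hS : ∀ i, (S i).Nonempty) (i : ι)
    (f : (ι → V) → ℝ) :
    𝔼 x ∈ Fintype.piFinset S, f x =
      𝔼 x ∈ Fintype.piFinset S, 𝔼 a ∈ S i, f (Function.update x i a) := by
  have hinj : Function.Injective fun _ : Unit => i := fun _ _ _ => rfl
  rw [expect_piFinset_resample hS hinj]
  refine expect_congr rfl fun x _ => ?_
  refine expect_nbij' (fun y => y ()) (fun a _ => a)
    (fun y hy => Fintype.mem_piFinset.1 hy ()) (fun a ha => Fintype.mem_piFinset.2 fun _ => ha)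
    (fun _ _ => rfl) (fun _ _ => rfl) fun y _ => congrArg f (funext fun j => ?_)
  rcases eq_or_ne j i with rfl | hj
  · rw [Function.update_self]
    exact hinj.extend_apply y x ()
  · rw [Function.update_of_ne hj, Function.extend_apply' _ _ _ fun ⟨_, h⟩ => hj h.symm]

lemma expect_piFinset_eval {S : ι → Finset V} (hS : ∀ i, (S i).Nonempty) (i : ι) (g : V → ℝ) :
    𝔼 x ∈ Fintype.piFinset S, g (x i) = 𝔼 a ∈ S i, g a := by
  rw [expect_piFinset_update hS i]
  simp only [Function.update_self]
  exact expect_const (Fintype.piFinset_nonempty.2 hS) _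

lemma expect_piFinset_eval₂ {S : ι → Finset V} (hS : ∀ i, (S i).Nonempty) {i j : ι}
    (hij : i ≠ j) (g : V → V → ℝ) :
    𝔼 x ∈ Fintype.piFinset S, g (x i) (x j) = 𝔼 a ∈ S i, 𝔼 b ∈ S j, g a b := by
  rw [expect_piFinset_update hS j]
  simp only [Function.update_self, Function.update_of_ne hij]
  exact expect_piFinset_eval hS i fun a => 𝔼 b ∈ S j, g a b

end Resampling

section Polynomial

/-- `f` is bounded by a polynomial on arguments `q ≥ 2`; all losses of the argument are measured
up to this relation. -/
def PolyBounded (f : ℕ → ℕ) : Prop := ∃ C, ∀ q ≥ 2, f q ≤ q ^ C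

namespace PolyBounded

variable {f g : ℕ → ℕ}

lemma const (a : ℕ) : PolyBounded fun _ => a :=
  ⟨a, fun _ hq => (Nat.lt_pow_self hq).le⟩

lemma id : PolyBounded fun q => q := ⟨1, fun q _ => (pow_one q).ge⟩

lemma pow_const (C : ℕ) : PolyBounded fun q => q ^ C := ⟨C, fun _ _ => le_rfl⟩

lemma mul (hf : PolyBounded f) (hg : PolyBounded g) : PolyBounded fun q => f q * g q := by
  obtain ⟨C, hC⟩ := hf
  obtain ⟨D, hD⟩ := hg
  exact ⟨C + D, fun q hq => (Nat.mul_le_mul (hC q hq) (hD q hq)).trans_eq (pow_add ..).symm⟩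

lemma comp (hf : PolyBounded f) (hg : PolyBounded g) (hg2 : ∀ q ≥ 2, 2 ≤ g q) :
    PolyBounded fun q => f (g q) := by
  obtain ⟨C, hC⟩ := hf
  obtain ⟨D, hD⟩ := hg
  refine ⟨D * C, fun q hq => ?_⟩
  calc f (g q) ≤ g q ^ C := hC _ (hg2 q hq)
    _ ≤ (q ^ D) ^ C := Nat.pow_le_pow_left (hD q hq) C
    _ = q ^ (D * C) := (pow_mul ..).symm

lemma pow (hf : PolyBounded f) (k : ℕ) : PolyBounded fun q => f q ^ k := by
  obtain ⟨C, hC⟩ := hf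
  exact ⟨C * k, fun q hq => (Nat.pow_le_pow_left (hC q hq) k).trans_eq (pow_mul ..).symm⟩

lemma add (hf : PolyBounded f) (hg : PolyBounded g) : PolyBounded fun q => f q + g q := by
  obtain ⟨C, hC⟩ := hf
  obtain ⟨D, hD⟩ := hg
  refine ⟨C + D + 1, fun q hq => ?_⟩
  have hq1 : 1 ≤ q := by omega
  calc f q + g q ≤ q ^ (C + D) + q ^ (C + D) :=
        add_le_add ((hC q hq).trans (Nat.pow_le_pow_right hq1 (by omega)))
          ((hD q hq).trans (Nat.pow_le_pow_right hq1 (by omega)))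
    _ = q ^ (C + D) * 2 := by ring
    _ ≤ q ^ (C + D + 1) := by rw [pow_succ]; gcongr

lemma eventually_le_two_pow (hf : PolyBounded f) : ∃ X, ∀ u ≥ X, f u ≤ 2 ^ u := by
  obtain ⟨C, hC⟩ := hf
  have hlim := tendsto_pow_const_div_const_pow_of_one_lt C (one_lt_two (α := ℝ))
  obtain ⟨X, hX⟩ := Filter.eventually_atTop.1 (hlim.eventually_le_const one_pos)
  refine ⟨max X 2, fun u hu => (hC u (le_of_max_le_right hu)).trans ?_⟩
  have := (div_le_one (by positivity)).1 (hX u (le_of_max_le_left hu))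
  exact_mod_cast this

end PolyBounded

end Polynomial

section Ramsey

variable {W : Type*}

lemma exists_isNClique_succ {Γ : SimpleGraph W} {S N : Finset W} {v : W} {a : ℕ} (hv : v ∈ S)
    (hN : N ⊆ S) (hadj : ∀ w ∈ N, Γ.Adj v w) (h : ∃ t ⊆ N, Γ.IsNClique a t) :
    ∃ t ⊆ S, Γ.IsNClique (a + 1) t := by
  obtain ⟨t, htN, ht⟩ := h
  exact ⟨insert v t, insert_subset hv (htN.trans hN), ht.insert fun w hw => hadj w (htN hw)⟩

lemma exists_isNClique_or_isNClique_compl (Γ : SimpleGraph W) (a b : ℕ) (S : Finset W)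
    (hS : 2 ^ (a + b) ≤ #S) :
    (∃ t ⊆ S, Γ.IsNClique a t) ∨ ∃ t ⊆ S, Γᶜ.IsNClique b t := by
  induction hm : a + b generalizing a b S with
  | zero =>
    obtain rfl : a = 0 := by omega
    exact .inl ⟨∅, empty_subset S, SimpleGraph.isNClique_empty.2 rfl⟩
  | succ m ih =>
    rcases a with - | a
    · exact .inl ⟨∅, empty_subset S, SimpleGraph.isNClique_empty.2 rfl⟩
    rcases b with - | b
    · exact .inr ⟨∅, empty_subset S, SimpleGraph.isNClique_empty.2 rfl⟩
    obtain ⟨v, hv⟩ : S.Nonempty := card_pos.1 ((by positivity : 0 < 2 ^ (m + 1)).trans_le (hm ▸ hS))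
    have hsplit := card_filter_add_card_filter_not (s := S.erase v) fun w => Γ.Adj v w
    rw [card_erase_of_mem hv] at hsplit
    have hsub (P : W → Prop) [DecidablePred P] : {w ∈ S.erase v | P w} ⊆ S :=
      (filter_subset _ _).trans (erase_subset _ _)
    rw [hm, pow_succ] at hS
    rcases le_or_gt (2 ^ m) #{w ∈ S.erase v | Γ.Adj v w} with hN | hN
    · rw [show m = a + (b + 1) by omega] at hN
      rcases ih a (b + 1) _ hN (by omega) with h | ⟨t, htN, ht⟩
      · exact .inl (exists_isNClique_succ hv (hsub _) (fun w hw => (mem_filter.1 hw).2) h)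
      · exact .inr ⟨t, htN.trans (hsub _), ht⟩
    · have hN' : 2 ^ (a + 1 + b) ≤ #{w ∈ S.erase v | ¬ Γ.Adj v w} := by
        rw [show a + 1 + b = m by omega]
        omega
      rcases ih (a + 1) b _ hN' (by omega) with ⟨t, htN, ht⟩ | h
      · exact .inl ⟨t, htN.trans (hsub _), ht⟩
      · refine .inr (exists_isNClique_succ hv (hsub _) (fun w hw => ?_) h)
        rw [mem_filter, mem_erase] at hw
        exact (SimpleGraph.compl_adj ..).2 ⟨hw.1.1.symm, hw.2⟩

lemma exists_homogeneous_embedding (Γ : SimpleGraph W) (κ : Type*) [Fintype κ] (S : Finset W)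
    (hS : 2 ^ (2 * Fintype.card κ) ≤ #S) :
    ∃ (c : Prop) (τ : κ ↪ W), (∀ i, τ i ∈ S) ∧ ∀ i j, i ≠ j → (Γ.Adj (τ i) (τ j) ↔ c) := by
  have emb {t : Finset W} (ht : #t = Fintype.card κ) : ∃ τ : κ ↪ W, ∀ i, τ i ∈ t := by
    let e : κ ≃ t := (Fintype.equivFin κ).trans (t.equivFinOfCardEq ht).symm
    exact ⟨e.toEmbedding.trans (.subtype _), fun i => (e i).2⟩
  rw [two_mul] at hS
  rcases exists_isNClique_or_isNClique_compl Γ _ _ S hS with ⟨t, htS, ht⟩ | ⟨t, htS, ht⟩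
  all_goals obtain ⟨τ, hτ⟩ := emb ht.card_eq
  · exact ⟨True, τ, fun i => htS (hτ i), fun i j hij =>
      iff_true_intro (ht.isClique (hτ i) (hτ j) (τ.injective.ne hij))⟩
  · exact ⟨False, τ, fun i => htS (hτ i), fun i j hij =>
      iff_false_intro ((SimpleGraph.compl_adj ..).1
        (ht.isClique (hτ i) (hτ j) (τ.injective.ne hij))).2⟩

end Ramsey

section Families

/-- A finite graph on an initial segment of `ℕ`, the form in which members of a forbidden family
are given. -/
abbrev FinGraph : Type := Σ k : ℕ, SimpleGraph (Fin k)

/-- `FamilyFree 𝓕 G` is the property `InducedFree 𝓕` for a graph `G` on an arbitrary vertex type;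
for `Fin n` the two agree definitionally. -/
def FamilyFree (𝓕 : Set FinGraph) {V : Type*} (G : SimpleGraph V) : Prop :=
  ∀ p ∈ 𝓕, IsEmpty (p.2 ↪g G)

lemma FamilyFree.of_embedding {𝓕 : Set FinGraph} {V W : Type*} {G : SimpleGraph V}
    {H : SimpleGraph W} (hG : FamilyFree 𝓕 G) (e : H ↪g G) : FamilyFree 𝓕 H :=
  fun p hp => ⟨fun f => (hG p hp).false (e.comp f)⟩

lemma exists_mem_adj_iff_of_mem {𝓕 : Set FinGraph} (hbip : ∃ p ∈ 𝓕, IsBipGraph p.2)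
    (hcobip : ∃ p ∈ 𝓕, IsCoBipGraph p.2) (hsplit : ∃ p ∈ 𝓕, IsSplitGraph p.2) (cA cB : Prop) :
    ∃ p ∈ 𝓕, ∃ U : Set (Fin p.1), (∀ u ∈ U, ∀ v ∈ U, u ≠ v → (p.2.Adj u v ↔ cA)) ∧
      ∀ u ∉ U, ∀ v ∉ U, u ≠ v → (p.2.Adj u v ↔ cB) := by
  by_cases hA : cA <;> by_cases hB : cB
  · obtain ⟨p, hp, U, hU, hUc⟩ := hcobip
    exact ⟨p, hp, U, by simpa only [hA, iff_true] using hU, by simpa only [hB, iff_true] using hUc⟩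
  · obtain ⟨p, hp, U, hU, hUc⟩ := hsplit
    exact ⟨p, hp, U, by simpa only [hA, iff_true] using hU,
      fun u hu v hv _ => by simpa only [hB, iff_false] using hUc u hu v hv⟩
  · obtain ⟨p, hp, U, hU, hUc⟩ := hsplit
    exact ⟨p, hp, Uᶜ, fun u hu v hv _ => by simpa only [hA, iff_false] using hUc u hu v hv,
      by simpa only [hB, iff_true, Set.mem_compl_iff, not_not] using hU⟩
  · obtain ⟨p, hp, U, hU, hUc⟩ := hbip
    exact ⟨p, hp, U, fun u hu v hv _ => by simpa only [hA, iff_false] using hU u hu v hv,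
      fun u hu v hv _ => by simpa only [hB, iff_false] using hUc u hu v hv⟩

end Families

section Traces

variable {α β κ V : Type*} {Γ : SimpleGraph (β ⊕ α)} {cA cB : Prop} {a : Set κ → α} {b : κ → β}

/-- A copy in `Γ` of the membership relation between the points and the subsets of `κ`, in which
all subsets are pairwise related by `cA` and all points by `cB`. It contains every small graph
whose vertices split into a part of type `cA` and a part of type `cB`. -/
structure IsHomogeneousPowerset (Γ : SimpleGraph (β ⊕ α)) (cA cB : Prop) (a : Set κ → α)
    (b : κ → β) : Prop where
  adj_iff_mem : ∀ i T, Γ.Adj (.inl (b i)) (.inr (a T)) ↔ i ∈ T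
  adj_set : ∀ S T, S ≠ T → (Γ.Adj (.inr (a S)) (.inr (a T)) ↔ cA)
  adj_point : ∀ i j, i ≠ j → (Γ.Adj (.inl (b i)) (.inl (b j)) ↔ cB)

namespace IsHomogeneousPowerset

lemma injective_set (h : IsHomogeneousPowerset Γ cA cB a b) : a.Injective := fun S T hST =>
  Set.ext fun i => by rw [← h.adj_iff_mem, hST, h.adj_iff_mem]

lemma injective_point (h : IsHomogeneousPowerset Γ cA cB a b) : b.Injective := fun i j hij =>
  (h.adj_iff_mem i {j}).1 (hij ▸ (h.adj_iff_mem j {j}).2 rfl)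

lemma nonempty_embedding (h : IsHomogeneousPowerset Γ cA cB a b)
    (H : SimpleGraph V) (U : Set V) (hU : ∀ u ∈ U, ∀ v ∈ U, u ≠ v → (H.Adj u v ↔ cA))
    (hUc : ∀ u ∉ U, ∀ v ∉ U, u ≠ v → (H.Adj u v ↔ cB)) (e : V ⊕ V ↪ κ) :
    Nonempty (H ↪g Γ) := by
  -- The second copy of `V` in `κ` only serves to give distinct vertices distinct labels.
  let label : V → Set κ := fun u => e '' {i | Sum.elim (H.Adj u) (· = u) i}
  have mem_label (u v : V) : e (.inl v) ∈ label u ↔ H.Adj u v := e.injective.mem_set_image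
  have label_ne {u v : V} (huv : u ≠ v) : label u ≠ label v := fun heq => by
    have hu : e (.inr u) ∈ label u := e.injective.mem_set_image.2 rfl
    rw [heq] at hu
    exact huv (e.injective.mem_set_image.1 hu)
  let f : V → β ⊕ α := fun u => if u ∈ U then .inr (a (label u)) else .inl (b (e (.inl u)))
  have hf : ∀ u v, u ≠ v → (Γ.Adj (f u) (f v) ↔ H.Adj u v) := fun u v huv => by
    by_cases hu : u ∈ U <;> by_cases hv : v ∈ U <;> simp only [f, hu, hv, if_true, if_false]
    · rw [h.adj_set _ _ (label_ne huv), hU u hu v hv huv]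
    · rw [SimpleGraph.adj_comm, h.adj_iff_mem, mem_label]
    · rw [h.adj_iff_mem, mem_label, SimpleGraph.adj_comm]
    · rw [h.adj_point _ _ fun heq => huv (Sum.inl_injective (e.injective heq)),
        hUc u hu v hv huv]
  have hinj : f.Injective := fun u v huv => by
    by_contra hne
    by_cases hu : u ∈ U <;> by_cases hv : v ∈ U <;>
      simp only [f, hu, hv, if_true, if_false, reduceCtorEq, Sum.inr.injEq, Sum.inl.injEq] at huv
    · exact label_ne hne (h.injective_set huv)
    · exact hne (Sum.inl_injective (e.injective (h.injective_point huv)))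
  refine ⟨⟨f, hinj⟩, fun {u v} => ?_⟩
  rcases eq_or_ne u v with rfl | huv
  · exact iff_of_false (Γ.irrefl) (H.irrefl)
  · exact hf u v huv

end IsHomogeneousPowerset

lemma exists_homogeneous_powerset (κ : Type*) [Fintype κ] (A : Finset α)
    (hA : 2 ^ (2 * 2 ^ Fintype.card κ) ≤ #A)
    (hsh : ∀ t ⊆ A, ∃ i, ∀ x ∈ A, Γ.Adj (.inl i) (.inr x) ↔ x ∈ t) :
    ∃ (cA : Prop) (a : Set κ ↪ α) (b : κ → β),
      (∀ S T, S ≠ T → (Γ.Adj (.inr (a S)) (.inr (a T)) ↔ cA)) ∧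
        ∀ i T, Γ.Adj (.inl (b i)) (.inr (a T)) ↔ i ∈ T := by
  rw [← Fintype.card_set] at hA
  obtain ⟨cA, a, haA, hcA⟩ := exists_homogeneous_embedding (Γ.comap Sum.inr) (Set κ) A hA
  have hpoint (i : κ) : ∃ y, ∀ T, Γ.Adj (.inl y) (.inr (a T)) ↔ i ∈ T := by
    obtain ⟨y, hy⟩ := hsh ({T : Set κ | i ∈ T}.toFinset.map a) fun x hx => by
      obtain ⟨T, -, rfl⟩ := mem_map.1 hx
      exact haA T
    refine ⟨y, fun T => ?_⟩
    rw [hy _ (haA T), mem_map' a, Set.mem_toFinset, Set.mem_ofPred_eq]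
  choose b hb using hpoint
  exact ⟨cA, a, b, hcA, hb⟩

lemma exists_isHomogeneousPowerset (κ : Type*) [Fintype κ] (A : Finset α)
    (hA : 2 ^ (2 * 2 ^ 2 ^ (2 * Fintype.card κ)) ≤ #A)
    (hsh : ∀ t ⊆ A, ∃ i, ∀ x ∈ A, Γ.Adj (.inl i) (.inr x) ↔ x ∈ t) :
    ∃ cA cB, ∃ (a : Set κ → α) (b : κ → β), IsHomogeneousPowerset Γ cA cB a b := by
  set κ' := Fin (2 ^ (2 * Fintype.card κ))
  obtain ⟨cA, a, b, hcA, hb⟩ := exists_homogeneous_powerset κ' A (by rwa [Fintype.card_fin]) hsh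
  obtain ⟨cB, τ, -, hcB⟩ := exists_homogeneous_embedding (Γ.comap fun i : κ' => .inl (b i)) κ univ
    (by rw [card_univ, Fintype.card_fin])
  refine ⟨cA, cB, fun T => a (τ '' T), b ∘ τ, fun i T => ?_, fun S T hST => ?_, hcB⟩
  · rw [Function.comp_apply, hb, τ.injective.mem_set_image]
  · exact hcA _ _ (τ.injective.image_injective.ne hST)

/-- The set of vertices on the right that are adjacent to the left vertex `y`. -/
def nbhdTrace [Fintype α] (Γ : SimpleGraph (β ⊕ α)) (y : β) : Finset α :=
  {x | Γ.Adj (.inl y) (.inr x)}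

/-- In an `𝓕`-free graph on `β ⊕ α` only polynomially many subsets of `α` are traces of vertices
in `β`. -/
def HasPolynomialTraces (𝓕 : Set FinGraph) (d : ℕ) : Prop :=
  ∀ (α β : Type) [Fintype α] (Γ : SimpleGraph (β ⊕ α)), FamilyFree 𝓕 Γ →
    ∀ I : Finset β, Set.InjOn (nbhdTrace Γ) I → #I ≤ (Fintype.card α + 1) ^ d

lemma sum_choose_le_succ_pow (s d : ℕ) : ∑ i ∈ Iic d, s.choose i ≤ (s + 1) ^ d := by
  rw [add_pow, ← Nat.range_succ_eq_Iic]
  refine sum_le_sum fun i hi => ?_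
  rw [one_pow, mul_one]
  exact (Nat.choose_le_pow s i).trans
    (Nat.le_mul_of_pos_right _ (Nat.choose_pos (mem_range_succ_iff.1 hi)))

lemma card_le_succ_pow_vcDim [Fintype α] (𝒜 : Finset (Finset α)) :
    #𝒜 ≤ (Fintype.card α + 1) ^ 𝒜.vcDim :=
  (card_le_card_shatterer 𝒜).trans
    (card_shatterer_le_sum_vcDim.trans (sum_choose_le_succ_pow _ _))

lemma exists_hasPolynomialTraces {𝓕 : Set FinGraph} {k : ℕ} (hk : ∀ p ∈ 𝓕, p.1 ≤ k)
    (htypes : ∀ cA cB : Prop, ∃ p ∈ 𝓕, ∃ U : Set (Fin p.1),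
      (∀ u ∈ U, ∀ v ∈ U, u ≠ v → (p.2.Adj u v ↔ cA)) ∧
        ∀ u ∉ U, ∀ v ∉ U, u ≠ v → (p.2.Adj u v ↔ cB)) :
    ∃ d, HasPolynomialTraces 𝓕 d := by
  set d := 2 ^ (2 * 2 ^ 2 ^ (2 * Fintype.card (Fin k ⊕ Fin k)))
  refine ⟨d, fun α β _ Γ hfree I hI => ?_⟩
  have hvc : (I.image (nbhdTrace Γ)).vcDim ≤ d := by
    refine Finset.sup_le fun A hA => ?_
    by_contra! hlt
    have hsh : ∀ t ⊆ A, ∃ i, ∀ x ∈ A, Γ.Adj (.inl i) (.inr x) ↔ x ∈ t := fun t ht => by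
      obtain ⟨_, hi, rfl⟩ := mem_shatterer.1 hA ht
      obtain ⟨i, -, rfl⟩ := mem_image.1 hi
      exact ⟨i, fun x hx => by
        simp only [nbhdTrace, mem_inter, hx, mem_filter, mem_univ, true_and]⟩
    obtain ⟨cA, cB, a, b, h⟩ := exists_isHomogeneousPowerset (Fin k ⊕ Fin k) A hlt.le hsh
    obtain ⟨p, hp, U, hU, hUc⟩ := htypes cA cB
    have e := (Fin.castLEEmb (hk p hp)).sumMap (Fin.castLEEmb (hk p hp))
    exact (hfree p hp).false (h.nonempty_embedding p.2 U hU hUc e).some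
  calc #I = #(I.image (nbhdTrace Γ)) := (card_image_of_injOn hI).symm
    _ ≤ (Fintype.card α + 1) ^ (I.image (nbhdTrace Γ)).vcDim := card_le_succ_pow_vcDim _
    _ ≤ (Fintype.card α + 1) ^ d := Nat.pow_le_pow_right (Nat.succ_pos _) hvc

end Traces

section Densities

variable {V κ ι : Type*} {G : SimpleGraph V}

/-- `y` maps adjacent pairs to adjacent pairs and distinct non-adjacent pairs to non-adjacent
pairs. It need not be injective, because non-adjacent vertices may be identified. -/
def IsInducedMap (H : SimpleGraph κ) (G : SimpleGraph V) (y : κ → V) : Prop :=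
  ∀ u v, u ≠ v → (G.Adj (y u) (y v) ↔ H.Adj u v)

/-- The probability that a uniformly random map `κ → V` is an induced map from `H` to `G`. -/
def inducedDensity [Fintype V] [Fintype κ] [DecidableEq κ] (H : SimpleGraph κ)
    (G : SimpleGraph V) : ℝ :=
  uniformProb univ (IsInducedMap H G)

variable [Fintype κ] [DecidableEq κ] [Fintype ι] [DecidableEq ι]

lemma uniformProb_piFinset_comp {S : ι → Finset V} (hS : ∀ i, (S i).Nonempty) {σ : κ → ι}
    (hσ : σ.Injective) (P : (κ → V) → Prop) :
    uniformProb (Fintype.piFinset S) (fun x => P (x ∘ σ)) =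
      uniformProb (Fintype.piFinset fun j => S (σ j)) P :=
  expect_piFinset_comp hS hσ fun y => if P y then 1 else 0

variable [Fintype V] [Nonempty V]

lemma uniformProb_piFinset_le_mul_univ {S : κ → Finset V} {M : ℕ}
    (hS : ∀ j, Fintype.card V ≤ M * #(S j)) (P : (κ → V) → Prop) :
    uniformProb (Fintype.piFinset S) P ≤ (M : ℝ) ^ Fintype.card κ * uniformProb univ P := by
  refine uniformProb_le_mul_of_card_le (subset_univ _) univ_nonempty ?_
  rw [card_univ, Fintype.card_fun, Fintype.card_piFinset]
  calc ((Fintype.card V ^ Fintype.card κ : ℕ) : ℝ) = ∏ _j : κ, (Fintype.card V : ℝ) := by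
        rw [prod_const, card_univ, Nat.cast_pow]
    _ ≤ ∏ j, (M * #(S j) : ℝ) :=
        prod_le_prod (fun _ _ => Nat.cast_nonneg _) fun j _ => by exact_mod_cast hS j
    _ = (M : ℝ) ^ Fintype.card κ * ((∏ j, #(S j) : ℕ) : ℝ) := by
        rw [prod_mul_distrib, prod_const, card_univ, Nat.cast_prod]

lemma uniformProb_isInducedMap_comp_le {S : ι → Finset V} {M : ℕ}
    (hS : ∀ i, Fintype.card V ≤ M * #(S i)) (H : SimpleGraph κ) {σ : κ → ι}
    (hσ : σ.Injective) :
    uniformProb (Fintype.piFinset S) (fun x => IsInducedMap H G (x ∘ σ)) ≤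
      (M : ℝ) ^ Fintype.card κ * inducedDensity H G := by
  have hne (i : ι) : (S i).Nonempty :=
    card_pos.1 (pos_of_mul_pos_right (Fintype.card_pos.trans_le (hS i)) M.zero_le)
  rw [uniformProb_piFinset_comp hne hσ]
  exact uniformProb_piFinset_le_mul_univ (fun j => hS (σ j)) _

lemma uniformProb_not_isEmpty_embedding_comap_le {S : ι → Finset V} {M : ℕ}
    (hS : ∀ i, Fintype.card V ≤ M * #(S i)) (H : SimpleGraph κ) :
    uniformProb (Fintype.piFinset S) (fun x => ¬ IsEmpty (H ↪g G.comap x)) ≤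
      (Fintype.card ι * M : ℝ) ^ Fintype.card κ * inducedDensity H G := by
  have hcard : (Fintype.card (κ ↪ ι) : ℝ) ≤ (Fintype.card ι : ℝ) ^ Fintype.card κ := by
    rw [Fintype.card_embedding_eq]
    exact_mod_cast Nat.descFactorial_le_pow _ _
  have hcopy : ∀ x ∈ Fintype.piFinset S, ¬ IsEmpty (H ↪g G.comap x) →
      ∃ σ ∈ (univ : Finset (κ ↪ ι)), IsInducedMap H G (x ∘ σ) := fun x _ hx => by
    obtain ⟨f⟩ := not_isEmpty_iff.1 hx
    exact ⟨f.toEmbedding, mem_univ _, fun u v _ => f.map_adj_iff⟩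
  calc uniformProb (Fintype.piFinset S) (fun x => ¬ IsEmpty (H ↪g G.comap x))
      ≤ ∑ σ : κ ↪ ι, uniformProb (Fintype.piFinset S) (fun x => IsInducedMap H G (x ∘ σ)) :=
        (uniformProb_mono hcopy).trans (uniformProb_exists_le _ _)
    _ ≤ ∑ _σ : κ ↪ ι, (M : ℝ) ^ Fintype.card κ * inducedDensity H G :=
        sum_le_sum fun σ _ => uniformProb_isInducedMap_comp_le hS H σ.injective
    _ = Fintype.card (κ ↪ ι) * ((M : ℝ) ^ Fintype.card κ * inducedDensity H G) := by
        rw [sum_const, card_univ, nsmul_eq_mul]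
    _ ≤ (Fintype.card ι : ℝ) ^ Fintype.card κ * ((M : ℝ) ^ Fintype.card κ * inducedDensity H G) :=
        mul_le_mul_of_nonneg_right hcard (mul_nonneg (by positivity) uniformProb_nonneg)
    _ = _ := by rw [mul_pow, mul_assoc]

lemma uniformProb_not_familyFree_comap_le [Nonempty ι] {𝓕 : Finset FinGraph} {k : ℕ}
    (hk : ∀ p ∈ 𝓕, p.1 ≤ k) {δ : ℝ} (hδ : ∀ p ∈ 𝓕, inducedDensity p.2 G ≤ δ)
    {S : ι → Finset V} {M : ℕ} (hS : ∀ i, Fintype.card V ≤ M * #(S i)) :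
    uniformProb (Fintype.piFinset S) (fun x => ¬ FamilyFree (𝓕 : Set FinGraph) (G.comap x)) ≤
      #𝓕 * (Fintype.card ι * M) ^ k * δ := by
  have hM : 0 < M := by
    obtain ⟨i⟩ := ‹Nonempty ι›
    exact pos_of_mul_pos_left (Fintype.card_pos.trans_le (hS i)) (Nat.zero_le _)
  have hbase : (1 : ℝ) ≤ Fintype.card ι * M := by
    exact_mod_cast Nat.mul_pos Fintype.card_pos hM
  calc uniformProb (Fintype.piFinset S) (fun x => ¬ FamilyFree (𝓕 : Set FinGraph) (G.comap x))
      ≤ ∑ p ∈ 𝓕, uniformProb (Fintype.piFinset S) (fun x => ¬ IsEmpty (p.2 ↪g G.comap x)) := by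
        refine (uniformProb_mono fun x _ hx => ?_).trans (uniformProb_exists_le _ _)
        simpa only [FamilyFree, mem_coe, not_forall, exists_prop] using hx
    _ ≤ ∑ _p ∈ 𝓕, (Fintype.card ι * M : ℝ) ^ k * δ := sum_le_sum fun p hp => by
        refine (uniformProb_not_isEmpty_embedding_comap_le hS p.2).trans ?_
        rw [Fintype.card_fin]
        exact mul_le_mul (pow_le_pow_right₀ hbase (hk p hp)) (hδ p hp) uniformProb_nonneg
          (by positivity)
    _ = #𝓕 * (Fintype.card ι * M) ^ k * δ := by rw [sum_const, nsmul_eq_mul, mul_assoc]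

end Densities

section Sampling

variable {ι V : Type*} [Fintype ι] [DecidableEq ι]

lemma uniformProb_not {s : Finset V} (hs : s.Nonempty) (P : V → Prop) :
    uniformProb s (fun x => ¬ P x) = 1 - uniformProb s P := by
  rw [eq_sub_iff_add_eq, uniformProb, uniformProb, ← expect_add_distrib]
  conv_rhs => rw [← expect_const hs (1 : ℝ)]
  refine expect_congr rfl fun x _ => ?_
  by_cases hP : P x <;> simp only [hP, not_true, not_false_iff, if_true, if_false, add_zero,
    zero_add]

lemma uniformProb_piFinset_forall (S : ι → Finset V) (P : ι → V → Prop) :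
    uniformProb (Fintype.piFinset S) (fun x => ∀ i, P i (x i)) =
      ∏ i, uniformProb (S i) (P i) := by
  have hfilter : {x ∈ Fintype.piFinset S | ∀ i, P i (x i)} =
      Fintype.piFinset fun i => {a ∈ S i | P i a} := by
    ext x
    simp only [mem_filter, Fintype.mem_piFinset, forall_and]
  simp only [uniformProb_eq_div_card]
  rw [hfilter, Fintype.card_piFinset, Fintype.card_piFinset, prod_div_distrib, Nat.cast_prod,
    Nat.cast_prod]

lemma one_sub_pow_mul_le {p : ℝ} {q : ℕ} (hp : p ≤ 1) (hpq : 1 ≤ q * p) (u : ℕ) :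
    (1 - p) ^ (q * u) ≤ (1 / 2) ^ u := by
  rw [pow_mul]
  refine pow_le_pow_left₀ (pow_nonneg (sub_nonneg.2 hp) q) ?_ u
  calc (1 - p) ^ q ≤ Real.exp (-p) ^ q :=
        pow_le_pow_left₀ (sub_nonneg.2 hp) (Real.one_sub_le_exp_neg p) q
    _ = Real.exp (-(q * p)) := by rw [← Real.exp_nat_mul, mul_neg]
    _ ≤ Real.exp (-1) := Real.exp_le_exp.2 (neg_le_neg hpq)
    _ ≤ 1 / 2 := Real.exp_neg_one_lt_half.le

lemma uniformProb_forall_notMem_le [Fintype V] [Nonempty V] {q u : ℕ} {D : Finset V}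
    (hD : Fintype.card V ≤ q * #D) :
    uniformProb univ (fun y : Fin (q * u) → V => ∀ i, y i ∉ D) ≤ (1 / 2) ^ u := by
  have hdens : uniformProb univ (· ∈ D) = (#D : ℝ) / Fintype.card V := by
    rw [uniformProb_eq_div_card, filter_univ_mem, card_univ]
  have hV : (0 : ℝ) < Fintype.card V := by exact_mod_cast Fintype.card_pos
  rw [← Fintype.piFinset_univ, uniformProb_piFinset_forall (P := fun _ a => a ∉ D), prod_const,
    card_univ, Fintype.card_fin, uniformProb_not univ_nonempty, hdens]
  refine one_sub_pow_mul_le ?_ ?_ u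
  · exact (div_le_one hV).2 (by exact_mod_cast card_le_univ D)
  · rw [mul_div_assoc', one_le_div hV]
    exact_mod_cast hD

/-- The indices `i` for which `x i` is `r`-related to every other entry of the sample `x`. -/
def isolatedIndices (r : V → V → Prop) (x : ι → V) : Finset ι := {i | ∀ j ≠ i, r (x i) (x j)}

lemma mul_card_le_expect_card_isolatedIndices [Fintype V] [Nonempty V] {r : V → V → Prop} {c : ℝ}
    (h : ∀ Z : Finset V, #Z ≤ Fintype.card ι → c ≤ uniformProb univ fun a => ∀ z ∈ Z, r a z) :
    c * Fintype.card ι ≤ 𝔼 x : ι → V, (#(isolatedIndices r x) : ℝ) := by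
  have hindex (i : ι) : c ≤ uniformProb univ fun x : ι → V => ∀ j ≠ i, r (x i) (x j) := by
    rw [uniformProb, ← Fintype.piFinset_univ, expect_piFinset_update (fun _ => univ_nonempty) i]
    refine le_expect (Fintype.piFinset_nonempty.2 fun _ => univ_nonempty) fun x _ => ?_
    have hZ : ∀ a, (∀ z ∈ (univ.erase i).image x, r a z) →
        ∀ j ≠ i, r (Function.update x i a i) (Function.update x i a j) := fun a ha j hj => by
      rw [Function.update_self, Function.update_of_ne hj]
      exact ha _ (mem_image_of_mem x (mem_erase.2 ⟨hj, mem_univ j⟩))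
    exact (h _ (card_image_le.trans (card_le_univ _))).trans (uniformProb_mono fun a _ => hZ a)
  calc c * Fintype.card ι = ∑ _i : ι, c := by rw [sum_const, card_univ, nsmul_eq_mul, mul_comm]
    _ ≤ ∑ i : ι, uniformProb univ fun x : ι → V => ∀ j ≠ i, r (x i) (x j) :=
        sum_le_sum fun i _ => hindex i
    _ = 𝔼 x : ι → V, (#(isolatedIndices r x) : ℝ) := by
        simp only [uniformProb_eq_expect, ← expect_sum_comm, isolatedIndices, sum_boole]

end Sampling

section Cover

variable {V : Type*} [Fintype V] {G : SimpleGraph V} {q u N d k : ℕ}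

/-- The vertices which distinguish the neighbourhoods of `x` and `y`. -/
def nbhdDiff (G : SimpleGraph V) (x y : V) : Finset V := {w | ¬ (G.Adj x w ↔ G.Adj y w)}

lemma mem_nbhdDiff {x y w : V} : w ∈ nbhdDiff G x y ↔ ¬ (G.Adj x w ↔ G.Adj y w) := by
  simp only [nbhdDiff, mem_filter, mem_univ, true_and]

lemma nbhdDiff_comm (x y : V) : nbhdDiff G x y = nbhdDiff G y x := by
  ext w
  rw [mem_nbhdDiff, mem_nbhdDiff, iff_comm (a := G.Adj x w)]

lemma card_nbhdDiff_triangle (x y z : V) :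
    #(nbhdDiff G x z) ≤ #(nbhdDiff G x y) + #(nbhdDiff G y z) := by
  refine (card_le_card fun w hw => ?_).trans (card_union_le _ _)
  rw [mem_union, mem_nbhdDiff, mem_nbhdDiff]
  rw [mem_nbhdDiff] at hw
  tauto

/-- The neighbourhoods of `x` and `y` differ in more than `card V / q` vertices. -/
def NbhdFar (G : SimpleGraph V) (q : ℕ) (x y : V) : Prop := Fintype.card V < q * #(nbhdDiff G x y)

lemma uniformProb_sum_forall_notMem_le {ι : Type*} [Fintype ι] [DecidableEq ι] [Nonempty V]
    (D : (ι → V) → Finset V) :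
    uniformProb univ (fun x : ι ⊕ Fin (q * u) → V => Fintype.card V ≤ q * #(D (x ∘ .inl)) ∧
      ∀ a, x (.inr a) ∉ D (x ∘ .inl)) ≤ (1 / 2) ^ u := by
  have hne : ∀ _ : ι ⊕ Fin (q * u), (univ : Finset V).Nonempty := fun _ => univ_nonempty
  have hinl (x : ι ⊕ Fin (q * u) → V) (y : Fin (q * u) → V) :
      Function.extend Sum.inr y x ∘ Sum.inl = x ∘ Sum.inl :=
    funext fun i => Function.extend_apply' _ _ _ fun ⟨_, h⟩ => Sum.inr_ne_inl h
  rw [uniformProb, ← Fintype.piFinset_univ, expect_piFinset_resample hne Sum.inr_injective]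
  refine expect_le (Fintype.piFinset_nonempty.2 hne) fun x _ => ?_
  simp only [hinl, Sum.inr_injective.extend_apply, Fintype.piFinset_univ]
  by_cases hD : Fintype.card V ≤ q * #(D (x ∘ .inl))
  · simp only [hD, true_and, ← uniformProb_eq_expect]
    exact uniformProb_forall_notMem_le hD
  · simp only [hD, false_and, if_false, expect_const_zero]
    positivity

lemma HasPolynomialTraces.card_isolatedIndices_le {𝓕 : Set FinGraph}
    (hd : HasPolynomialTraces 𝓕 d) {α β : Type} [Fintype α] [Fintype β] [DecidableEq β]
    {x : β ⊕ α → V}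
    (hfree : FamilyFree 𝓕 (G.comap x))
    (hdetect : ∀ i j, NbhdFar G q (x (.inl i)) (x (.inl j)) →
      ∃ a, x (.inr a) ∈ nbhdDiff G (x (.inl i)) (x (.inl j))) :
    #(isolatedIndices (NbhdFar G q) (x ∘ .inl)) ≤ (Fintype.card α + 1) ^ d := by
  refine hd α β (G.comap x) hfree _ fun i hi j _ hij => ?_
  by_contra hne
  have hfar := (mem_filter.1 (mem_coe.1 hi)).2 j (Ne.symm hne)
  obtain ⟨a, ha⟩ := hdetect i j hfar
  have := congrArg (a ∈ ·) hij
  simp only [nbhdTrace, mem_filter, mem_univ, true_and, SimpleGraph.comap_adj, eq_iff_iff] at this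
  exact mem_nbhdDiff.1 ha this

lemma uniformProb_undetected_le [Nonempty V] :
    uniformProb univ (fun x : Fin N ⊕ Fin (q * u) → V =>
      ∃ ij ∈ (univ : Finset (Fin N × Fin N)), NbhdFar G q (x (.inl ij.1)) (x (.inl ij.2)) ∧
        ∀ a, x (.inr a) ∉ nbhdDiff G (x (.inl ij.1)) (x (.inl ij.2))) ≤
      (N : ℝ) ^ 2 * (1 / 2) ^ u := by
  refine (uniformProb_exists_le _ _).trans ?_
  calc _ ≤ ∑ _ij : Fin N × Fin N, (1 / 2 : ℝ) ^ u := sum_le_sum fun ij _ =>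
        (uniformProb_mono fun x _ hx => ⟨hx.1.le, hx.2⟩).trans
          (uniformProb_sum_forall_notMem_le fun y => nbhdDiff G (y ij.1) (y ij.2))
    _ = (N : ℝ) ^ 2 * (1 / 2) ^ u := by
        rw [sum_const, card_univ, Fintype.card_prod, Fintype.card_fin, nsmul_eq_mul, sq,
          Nat.cast_mul]

lemma HasPolynomialTraces.expect_card_isolatedIndices_le [Nonempty V] {𝓕 : Finset FinGraph}
    (hd : HasPolynomialTraces (𝓕 : Set FinGraph) d) (hk : ∀ p ∈ 𝓕, p.1 ≤ k) {δ : ℝ}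
    (hδ : ∀ p ∈ 𝓕, inducedDensity p.2 G ≤ δ) (hN : 0 < N) :
    𝔼 y : Fin N → V, (#(isolatedIndices (NbhdFar G q) y) : ℝ) ≤
      (q * u + 1 : ℕ) ^ d + N * (#𝓕 * (N + q * u : ℕ) ^ k * δ + N ^ 2 * (1 / 2) ^ u) := by
  have : Nonempty (Fin N ⊕ Fin (q * u)) := ⟨.inl ⟨0, hN⟩⟩
  let NotFree (x : Fin N ⊕ Fin (q * u) → V) : Prop :=
    ¬ FamilyFree (𝓕 : Set FinGraph) (G.comap x)
  let Undetected (x : Fin N ⊕ Fin (q * u) → V) : Prop :=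
    ∃ ij ∈ (univ : Finset (Fin N × Fin N)), NbhdFar G q (x (.inl ij.1)) (x (.inl ij.2)) ∧
      ∀ a, x (.inr a) ∉ nbhdDiff G (x (.inl ij.1)) (x (.inl ij.2))
  have hbad : uniformProb univ (fun x => NotFree x ∨ Undetected x) ≤
      #𝓕 * (N + q * u : ℕ) ^ k * δ + N ^ 2 * (1 / 2) ^ u := by
    refine (uniformProb_or_le _ _).trans (add_le_add ?_ uniformProb_undetected_le)
    have h := uniformProb_not_familyFree_comap_le (ι := Fin N ⊕ Fin (q * u)) hk hδ (M := 1)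
      (S := fun _ => univ) fun _ => by rw [one_mul, card_univ]
    simpa only [Fintype.piFinset_univ, Fintype.card_sum, Fintype.card_fin, Nat.cast_one,
      mul_one] using h
  have hcomp := expect_piFinset_comp (ι := Fin N ⊕ Fin (q * u)) (S := fun _ => (univ : Finset V))
    (fun _ => univ_nonempty) Sum.inl_injective
    fun y => (#(isolatedIndices (NbhdFar G q) y) : ℝ)
  rw [Fintype.piFinset_univ, Fintype.piFinset_univ] at hcomp
  rw [← hcomp]
  refine (expect_le_add_mul_uniformProb (P := fun x => NotFree x ∨ Undetected x) univ_nonempty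
    (B := (q * u + 1 : ℕ) ^ d) (M := N) (by positivity) (fun x _ => ?_) fun x _ hx => ?_).trans
    (by gcongr)
  · exact_mod_cast (card_le_univ _).trans_eq (Fintype.card_fin N)
  · rw [not_or, not_not] at hx
    have hdetect : ∀ i j, NbhdFar G q (x (.inl i)) (x (.inl j)) →
        ∃ a, x (.inr a) ∈ nbhdDiff G (x (.inl i)) (x (.inl j)) := fun i j hfar => by
      by_contra! hnone
      exact hx.2 ⟨(i, j), mem_univ _, hfar, hnone⟩
    have := hd.card_isolatedIndices_le hx.1 hdetect
    rw [Fintype.card_fin] at this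
    exact_mod_cast this

lemma HasPolynomialTraces.exists_cover [Nonempty V] {𝓕 : Finset FinGraph}
    (hd : HasPolynomialTraces (𝓕 : Set FinGraph) d) (hk : ∀ p ∈ 𝓕, p.1 ≤ k) {δ : ℝ}
    (hδ : ∀ p ∈ 𝓕, inducedDensity p.2 G ≤ δ) (hq : 0 < q)
    (hN : 4 * q * (q * u + 1) ^ d ≤ N) (hu : 4 * q * N ^ 2 ≤ 2 ^ u)
    (hcount : 4 * q * (#𝓕 * (N + q * u : ℕ) ^ k * δ) ≤ 1) :
    ∃ Z : Finset V, #Z ≤ N ∧ q * #{x | ∀ z ∈ Z, NbhdFar G q x z} ≤ Fintype.card V := by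
  by_contra! hcon
  have hV : (0 : ℝ) < Fintype.card V := by exact_mod_cast Fintype.card_pos
  have hq0 : (0 : ℝ) < q := by exact_mod_cast hq
  have hN0 : 0 < N := (by positivity : 0 < 4 * q * (q * u + 1) ^ d).trans_le hN
  have hN0' : (0 : ℝ) < N := by exact_mod_cast hN0
  have hlower : (1 / q : ℝ) * N ≤ 𝔼 y : Fin N → V, (#(isolatedIndices (NbhdFar G q) y) : ℝ) := by
    conv_lhs => rw [← Fintype.card_fin N]
    refine mul_card_le_expect_card_isolatedIndices fun Z hZ => ?_
    rw [Fintype.card_fin] at hZ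
    rw [uniformProb_eq_div_card, card_univ, div_le_div_iff₀ hq0 hV, one_mul, mul_comm]
    exact_mod_cast (hcon Z hZ).le
  have hupper := hlower.trans (hd.expect_card_isolatedIndices_le (u := u) hk hδ hN0)
  have hN' : 4 * q * ((q * u + 1 : ℕ) : ℝ) ^ d ≤ N := by exact_mod_cast hN
  have hu' : 4 * q * ((N : ℝ) ^ 2 * (1 / 2) ^ u) ≤ 1 := by
    rw [one_div_pow, mul_one_div, mul_div_assoc', div_le_one (by positivity)]
    exact_mod_cast hu
  have hscaled : 4 * (N : ℝ) ≤ 3 * N :=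
    calc 4 * (N : ℝ) = 4 * q * (1 / q * N) := by field_simp
      _ ≤ 4 * q * ((q * u + 1 : ℕ) ^ d +
          N * (#𝓕 * (N + q * u : ℕ) ^ k * δ + N ^ 2 * (1 / 2) ^ u)) := by gcongr
      _ = 4 * q * ((q * u + 1 : ℕ) : ℝ) ^ d + N * (4 * q * (#𝓕 * (N + q * u : ℕ) ^ k * δ)) +
          N * (4 * q * ((N : ℝ) ^ 2 * (1 / 2) ^ u)) := by ring
      _ ≤ N + N * 1 + N * 1 := by gcongr
      _ = 3 * N := by ring
  linarith

end Cover

section Clustering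

universe u

variable {V ι κ : Type*} [Fintype V]

/-- The vertices of colour `a`. -/
def colorClass (c : V → κ) (a : κ) : Finset V := {x | c x = a}

lemma mem_colorClass {c : V → κ} {a : κ} {x : V} : x ∈ colorClass c a ↔ c x = a := by
  simp only [colorClass, mem_filter, mem_univ, true_and]

lemma exists_coloring_large_classes {κ : Type u} [Fintype κ] (p : V → Option κ) (W : ℕ) :
    ∃ (ι : Type u) (_ : Fintype ι) (c : V → Option ι) (f : ι → κ),
      (∀ x i, c x = some i → p x = some (f i)) ∧
      (∀ i, Fintype.card V ≤ W * #(colorClass c (some i))) ∧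
      W * #(colorClass c none) ≤
        W * #(colorClass p none) + Fintype.card κ * Fintype.card V := by
  let IsLarge (a : κ) : Prop := Fintype.card V ≤ W * #(colorClass p (some a))
  let c (x : V) : Option {a // IsLarge a} :=
    (p x).bind fun a => if h : IsLarge a then some ⟨a, h⟩ else none
  have hc (x : V) (i : {a // IsLarge a}) : c x = some i ↔ p x = some i.1 := by
    simp only [c, Option.bind_eq_some_iff, Option.dite_none_right_eq_some, Option.some.injEq,
      Subtype.ext_iff]
    exact ⟨fun ⟨_, ha, _, hai⟩ => hai ▸ ha, fun h => ⟨i, h, i.2, rfl⟩⟩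
  refine ⟨{a // IsLarge a}, inferInstance, c, (↑), fun x i => (hc x i).1, fun i => ?_, ?_⟩
  · have : colorClass c (some i) = colorClass p (some i.1) := by
      ext x
      rw [mem_colorClass, mem_colorClass, hc]
    rw [this]
    exact i.2
  · have hsub : colorClass c none ⊆ colorClass p none ∪
        ({a | ¬ IsLarge a} : Finset κ).biUnion fun a => colorClass p (some a) := fun x hx => by
      rw [mem_colorClass] at hx
      rw [mem_union, mem_biUnion, mem_colorClass]
      rcases hp : p x with _ | a
      · exact .inl rfl
      · refine .inr ⟨a, mem_filter.2 ⟨mem_univ a, fun ha => ?_⟩, mem_colorClass.2 hp⟩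
        rw [(hc x ⟨a, ha⟩).2 hp] at hx
        exact Option.some_ne_none _ hx
    calc W * #(colorClass c none)
        ≤ W * (#(colorClass p none) + ∑ a with ¬ IsLarge a, #(colorClass p (some a))) := by
          gcongr
          exact (card_le_card hsub).trans
            ((card_union_le _ _).trans (Nat.add_le_add_left card_biUnion_le _))
      _ = W * #(colorClass p none) + ∑ a with ¬ IsLarge a, W * #(colorClass p (some a)) := by
          rw [mul_add, mul_sum]
      _ ≤ W * #(colorClass p none) + Fintype.card κ * Fintype.card V := by
          gcongr
          refine (sum_le_card_nsmul _ _ _ fun a ha => (not_le.1 (mem_filter.1 ha).2).le).trans ?_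
          rw [smul_eq_mul]
          gcongr
          exact card_le_univ _

/-- `c` partitions the vertices of `G`, apart from an exceptional class of size at most `card V / q`
where its value is `none`, into classes whose size is between `card V / W` and `card V / q` and
whose members have neighbourhoods which pairwise differ in at most `card V / q` vertices. -/
structure IsClustering (G : SimpleGraph V) (q W : ℕ) (c : V → Option ι) : Prop where
  card_none_le : q * #(colorClass c none) ≤ Fintype.card V
  le_card : ∀ i, Fintype.card V ≤ W * #(colorClass c (some i))
  card_le : ∀ i, q * #(colorClass c (some i)) ≤ Fintype.card V
  close : ∀ x y, c x ≠ none → c x = c y → q * #(nbhdDiff G x y) ≤ Fintype.card V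

lemma exists_balanced_parts (V : Type*) [Fintype V] {L : ℕ} (hL : 0 < L)
    (hLV : L ≤ Fintype.card V) :
    ∃ P : Finpartition (univ : Finset V), #P.parts = L ∧
      ∀ t ∈ P.parts, L * #t ≤ Fintype.card V + L := by
  obtain ⟨P, hP, rfl⟩ := Finpartition.exists_equipartition_card_eq univ hL.ne' hLV
  refine ⟨P, rfl, fun t ht => ?_⟩
  calc #P.parts * #t ≤ #P.parts * (Fintype.card V / #P.parts + 1) := by
        gcongr
        exact hP.card_part_le_average_add_one ht
    _ ≤ Fintype.card V + #P.parts := by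
        rw [mul_add, mul_one]
        gcongr
        exact Nat.mul_div_le _ _

lemma exists_isClustering_of_cover {V : Type u} [Fintype V] {G : SimpleGraph V} {q N : ℕ}
    (hq : 0 < q) (hN : 0 < N) (hV : 2 * q ≤ Fintype.card V) {Z : Finset V} (hZN : #Z ≤ N)
    (hZ : 2 * q * #{x | ∀ z ∈ Z, NbhdFar G (2 * q) x z} ≤ Fintype.card V) :
    ∃ (ι : Type u) (_ : Fintype ι) (c : V → Option ι), IsClustering G q (4 * q ^ 2 * N) c := by
  obtain ⟨P, hPcard, hP⟩ := exists_balanced_parts V (by positivity : 0 < 2 * q) hV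
  have hpart (x : V) : P.part x ∈ P.parts := P.part_mem.2 (mem_univ x)
  let p (x : V) : Option (Z × P.parts) :=
    if h : ∃ z : Z, ¬ NbhdFar G (2 * q) x z then some (h.choose, ⟨P.part x, hpart x⟩) else none
  have hp_none (x : V) (hx : p x = none) : ∀ z ∈ Z, NbhdFar G (2 * q) x z := fun z hz => by
    by_contra hfar
    simp only [p, dif_pos (⟨⟨z, hz⟩, hfar⟩ : ∃ z : Z, ¬ NbhdFar G (2 * q) x z), reduceCtorEq] at hx
  have hp_some (x : V) (z : Z) (t : P.parts) (hx : p x = some (z, t)) :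
      ¬ NbhdFar G (2 * q) x z ∧ x ∈ (t : Finset V) := by
    simp only [p, Option.dite_none_right_eq_some, Option.some.injEq, Prod.mk.injEq] at hx
    obtain ⟨h, rfl, rfl⟩ := hx
    exact ⟨h.choose_spec, P.mem_part (mem_univ x)⟩
  obtain ⟨ι, hι, c, f, hcf, hlarge, hnone⟩ := exists_coloring_large_classes p (4 * q ^ 2 * N)
  refine ⟨ι, hι, c, ?_, hlarge, fun i => ?_, fun x y hx hxy => ?_⟩
  · have hcover : 2 * q * #(colorClass p none) ≤ Fintype.card V :=
      (Nat.mul_le_mul_left _ (card_le_card fun x hx => mem_filter.2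
        ⟨mem_univ x, hp_none x (mem_colorClass.1 hx)⟩)).trans hZ
    have hlabels : Fintype.card (Z × P.parts) ≤ N * (2 * q) := by
      rw [Fintype.card_prod, Fintype.card_coe, Fintype.card_coe, hPcard]
      gcongr
    refine Nat.le_of_mul_le_mul_left ?_ (by positivity : 0 < 4 * q * N)
    calc 4 * q * N * (q * #(colorClass c none)) = 4 * q ^ 2 * N * #(colorClass c none) := by ring
      _ ≤ 4 * q ^ 2 * N * #(colorClass p none) + N * (2 * q) * Fintype.card V := by
          refine hnone.trans ?_
          gcongr
      _ = 2 * q * N * (2 * q * #(colorClass p none)) + N * (2 * q) * Fintype.card V := by ring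
      _ ≤ 2 * q * N * Fintype.card V + N * (2 * q) * Fintype.card V := by gcongr
      _ = 4 * q * N * Fintype.card V := by ring
  · have hsub : colorClass c (some i) ⊆ (f i).2 := fun x hx =>
      (hp_some x (f i).1 (f i).2 (hcf x i (mem_colorClass.1 hx))).2
    have := hP _ (f i).2.2
    have := card_le_card hsub
    nlinarith
  · obtain ⟨i, hi⟩ := Option.ne_none_iff_exists'.1 hx
    have hxz := (hp_some x _ _ (hcf x i hi)).1
    have hyz := (hp_some y _ _ (hcf y i (hxy ▸ hi))).1
    have htri := card_nbhdDiff_triangle (G := G) x (f i).1 y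
    rw [nbhdDiff_comm (f i).1.1 y] at htri
    rw [NbhdFar, not_lt] at hxz hyz
    nlinarith

lemma HasPolynomialTraces.exists_isClustering {𝓕 : Finset FinGraph} {d k : ℕ}
    (hd : HasPolynomialTraces (𝓕 : Set FinGraph) d) (hk : ∀ p ∈ 𝓕, p.1 ≤ k) :
    ∃ C : ℕ, ∀ q ≥ 2, ∀ (V : Type u) [Fintype V] (G : SimpleGraph V), q ^ C ≤ Fintype.card V →
      (∀ p ∈ 𝓕, inducedDensity p.2 G ≤ ((q : ℝ) ^ C)⁻¹) →
      ∃ (ι : Type u) (_ : Fintype ι) (c : V → Option ι), IsClustering G q (q ^ C) c := by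
  let N (u : ℕ) : ℕ := 8 * u * (2 * u * u + 1) ^ d
  have hN : PolyBounded N := ((PolyBounded.const 8).mul .id).mul
    (((((PolyBounded.const 2).mul .id).mul .id).add (.const 1)).pow d)
  obtain ⟨X, hX⟩ := (((PolyBounded.const 8).mul .id).mul (hN.pow 2)).eventually_le_two_pow
  have hu : PolyBounded fun q => q + X := PolyBounded.id.add (.const X)
  have hNX : PolyBounded fun q => N (q + X) := hN.comp hu fun q hq => by omega
  let size (q : ℕ) : ℕ := N (q + X) + 2 * q * (q + X)
  have hsize : PolyBounded size := hNX.add (((PolyBounded.const 2).mul .id).mul hu)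
  obtain ⟨C, hC⟩ := ((((PolyBounded.const 4).mul (PolyBounded.id.pow 2)).mul hNX).add
    ((PolyBounded.const 8).mul .id)).add
      (((PolyBounded.const 8).mul .id).mul ((PolyBounded.const #𝓕).mul (hsize.pow k)))
  refine ⟨C, fun q hq V _ G hn hδ => ?_⟩
  have hCq : 4 * q ^ 2 * N (q + X) + 8 * q + 8 * q * (#𝓕 * size q ^ k) ≤ q ^ C := hC q hq
  have hN0 : 0 < N (q + X) := by positivity
  have : Nonempty V := Fintype.card_pos_iff.1 ((by positivity : 0 < q ^ C).trans_le hn)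
  have hNle : 4 * (2 * q) * (2 * q * (q + X) + 1) ^ d ≤ N (q + X) := by
    rw [← mul_assoc]
    unfold N
    gcongr <;> omega
  have hule : 4 * (2 * q) * N (q + X) ^ 2 ≤ 2 ^ (q + X) := by
    refine le_trans ?_ (hX (q + X) (Nat.le_add_left X q))
    rw [← mul_assoc]
    gcongr <;> omega
  have hcount : 4 * (2 * q : ℕ) *
      (#𝓕 * ((size q : ℕ) : ℝ) ^ k * ((q : ℝ) ^ C)⁻¹) ≤ 1 := by
    rw [← mul_assoc, ← div_eq_mul_inv, div_le_one (by positivity)]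
    have : 8 * q * (#𝓕 * size q ^ k) ≤ q ^ C := (Nat.le_add_left _ _).trans hCq
    calc 4 * ((2 * q : ℕ) : ℝ) * (#𝓕 * (size q : ℝ) ^ k)
        = (8 * q * (#𝓕 * size q ^ k) : ℕ) := by push_cast; ring
      _ ≤ (q : ℝ) ^ C := by exact_mod_cast this
  obtain ⟨Z, hZN, hZ⟩ := hd.exists_cover hk hδ (by positivity) hNle hule hcount
  obtain ⟨ι, hι, c, hc⟩ := exists_isClustering_of_cover (by positivity) hN0 (by omega) hZN hZ
  exact ⟨ι, hι, c, hc.card_none_le,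
    fun i => (hc.le_card i).trans (Nat.mul_le_mul_right _ (by omega)), hc.card_le, hc.close⟩

end Clustering

section Representatives

variable {V ι κ : Type*} [Fintype V] {G : SimpleGraph V}

lemma expect_uniformProb_colorClass_le (c : V → κ) (S D : Finset V) :
    𝔼 a ∈ S, uniformProb (colorClass c (c a)) (· ∈ D) ≤ (#D : ℝ) / #S := by
  rw [expect_eq_sum_div_card]
  gcongr
  have hexpand (a : V) : uniformProb (colorClass c (c a)) (· ∈ D) =
      ∑ w ∈ D, if c a = c w then (#(colorClass c (c w)) : ℝ)⁻¹ else 0 := by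
    have hinter : {w ∈ colorClass c (c a) | w ∈ D} = {w ∈ D | c a = c w} := by
      ext w
      rw [mem_filter, mem_filter, mem_colorClass, and_comm, eq_comm]
    rw [uniformProb_eq_div_card, hinter, ← sum_filter, div_eq_mul_inv, ← nsmul_eq_mul]
    refine (sum_eq_card_nsmul fun w hw => ?_).symm
    rw [(mem_filter.1 hw).2]
  calc ∑ a ∈ S, uniformProb (colorClass c (c a)) (· ∈ D)
      = ∑ w ∈ D, ∑ a ∈ S, if c a = c w then (#(colorClass c (c w)) : ℝ)⁻¹ else 0 := by
        rw [sum_comm]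
        exact sum_congr rfl fun a _ => hexpand a
    _ ≤ ∑ _w ∈ D, 1 := sum_le_sum fun w _ => by
        rw [← sum_filter, sum_const, nsmul_eq_mul]
        refine mul_inv_le_one_of_le₀ ?_ (Nat.cast_nonneg _)
        exact_mod_cast card_le_card fun a ha => mem_colorClass.2 (mem_filter.1 ha).2
    _ = #D := by rw [sum_const, nsmul_eq_mul, mul_one]

/-- The probability that random vertices of the colours of `a` and `b` are joined differently from
`a` and `b`. -/
def disagreeProb (G : SimpleGraph V) (c : V → κ) (a b : V) : ℝ :=
  𝔼 w ∈ colorClass c (c a), uniformProb (colorClass c (c b)) fun w' =>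
    ¬ (G.Adj w w' ↔ G.Adj a b)

lemma disagreeProb_nonneg (c : V → κ) (a b : V) : 0 ≤ disagreeProb G c a b :=
  expect_nonneg fun _ _ => uniformProb_nonneg

lemma disagreeProb_le (c : V → κ) (a b : V) :
    disagreeProb G c a b ≤
      (𝔼 w' ∈ colorClass c (c b), uniformProb (colorClass c (c a)) (· ∈ nbhdDiff G w' b)) +
        𝔼 w ∈ colorClass c (c a), if b ∈ nbhdDiff G w a then 1 else 0 := by
  have hb : (colorClass c (c b)).Nonempty := ⟨b, mem_colorClass.2 rfl⟩
  have hswap : 𝔼 w' ∈ colorClass c (c b), uniformProb (colorClass c (c a))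
      (· ∈ nbhdDiff G w' b) = 𝔼 w ∈ colorClass c (c a), 𝔼 w' ∈ colorClass c (c b),
        if w ∈ nbhdDiff G w' b then (1 : ℝ) else 0 := by
    simp only [uniformProb_eq_expect]
    exact expect_comm _ _ _
  rw [hswap, ← expect_add_distrib]
  refine expect_le_expect fun w _ => ?_
  rw [← expect_const hb (if b ∈ nbhdDiff G w a then (1 : ℝ) else 0), ← expect_add_distrib]
  refine expect_le_expect fun w' _ => ?_
  simp only [mem_nbhdDiff, G.adj_comm w' w, G.adj_comm b w]
  by_cases h₁ : G.Adj w w' <;> by_cases h₂ : G.Adj w b <;> by_cases h₃ : G.Adj a b <;>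
    simp [h₁, h₂, h₃]

lemma expect_disagreeProb_le {c : V → κ} {S T : Finset V} (hS : S.Nonempty) (hT : T.Nonempty)
    {m : ℝ} (hSm : ∀ a ∈ S, ∀ w, c w = c a → (#(nbhdDiff G w a) : ℝ) ≤ m)
    (hTm : ∀ b ∈ T, ∀ w, c w = c b → (#(nbhdDiff G w b) : ℝ) ≤ m) :
    𝔼 a ∈ S, 𝔼 b ∈ T, disagreeProb G c a b ≤ m / #S + m / #T := by
  have hclass (a : V) : (colorClass c (c a)).Nonempty := ⟨a, mem_colorClass.2 rfl⟩
  refine (expect_le_expect fun a _ => expect_le_expect fun b _ => disagreeProb_le c a b).trans ?_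
  simp only [expect_add_distrib]
  gcongr
  · rw [expect_comm]
    refine expect_le hT fun b hb => ?_
    rw [expect_comm]
    refine expect_le (hclass b) fun w' hw' => ?_
    refine (expect_uniformProb_colorClass_le c S _).trans ?_
    gcongr
    exact hTm b hb w' (mem_colorClass.1 hw')
  · refine expect_le hS fun a ha => ?_
    rw [expect_comm]
    refine expect_le (hclass a) fun w hw => ?_
    rw [expect_eq_sum_div_card, sum_boole]
    gcongr
    refine le_trans ?_ (hSm a ha w (mem_colorClass.1 hw))
    exact_mod_cast card_le_card fun b hb => (mem_filter.1 hb).2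

lemma expect_card_mul_card_filter_le {V : Type*} {A B T : Finset V} (D : V → Finset V)
    (hT : T.Nonempty) (hTB : T ⊆ B) (hB : #B ≤ 2 * #T) :
    𝔼 b ∈ T, (#B : ℝ) * #{x ∈ A | b ∈ D x} ≤ ∑ x ∈ A, 2 * (#{b ∈ B | b ∈ D x} : ℝ) := by
  have hT0 : (0 : ℝ) < #T := by exact_mod_cast hT.card_pos
  have hB' : (#B : ℝ) ≤ 2 * #T := by exact_mod_cast hB
  simp only [← sum_boole]
  rw [← mul_expect, expect_sum_comm, mul_sum]
  refine sum_le_sum fun x _ => ?_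
  rw [expect_eq_sum_div_card, sum_boole, sum_boole, mul_div_assoc', div_le_iff₀ hT0]
  calc (#B : ℝ) * #{b ∈ T | b ∈ D x} ≤ 2 * #T * #{b ∈ B | b ∈ D x} := by gcongr
    _ = 2 * #{b ∈ B | b ∈ D x} * #T := by ring

variable [Fintype ι]

lemma sum_card_colorClass_some_inter_le (c : V → Option ι) (D : Finset V) :
    ∑ i, #{x ∈ colorClass c (some i) | x ∈ D} ≤ #D := by
  rw [← card_biUnion]
  · exact card_le_card fun x hx => by
      obtain ⟨i, -, hi⟩ := mem_biUnion.1 hx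
      exact (mem_filter.1 hi).2
  · intro i _ j _ hij
    refine disjoint_left.2 fun x hi hj => hij ?_
    rw [mem_filter, mem_colorClass] at hi hj
    exact Option.some_injective _ (hi.1.symm.trans hj.1)

lemma sum_card_colorClass_some_le (c : V → Option ι) :
    ∑ i, #(colorClass c (some i)) ≤ Fintype.card V := by
  simpa only [mem_univ, filter_true, card_univ] using sum_card_colorClass_some_inter_le c univ

lemma IsClustering.card_index_le [Nonempty V] {q W : ℕ} {c : V → Option ι}
    (hc : IsClustering G q W c) : Fintype.card ι ≤ W := by
  refine Nat.le_of_mul_le_mul_right ?_ (Fintype.card_pos (α := V))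
  calc Fintype.card ι * Fintype.card V = ∑ _i : ι, Fintype.card V := by
        rw [sum_const, card_univ, smul_eq_mul]
    _ ≤ ∑ i, W * #(colorClass c (some i)) := sum_le_sum fun i _ => hc.le_card i
    _ ≤ W * Fintype.card V := by
        rw [← mul_sum]
        exact Nat.mul_le_mul_left _ (sum_card_colorClass_some_le c)

lemma IsClustering.sum_card_nbhdDiff_filter_le {q W : ℕ} {c : V → Option ι}
    (hc : IsClustering G q W c) (hq : 0 < q) {i : ι} {x a : V}
    (hx : x ∈ colorClass c (some i)) (ha : a ∈ colorClass c (some i)) :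
    ∑ j, (#{b ∈ colorClass c (some j) | b ∈ nbhdDiff G x a} : ℝ) ≤ Fintype.card V / q := by
  rw [mem_colorClass] at hx ha
  have hclose := hc.close x a (hx ▸ Option.some_ne_none i) (hx.trans ha.symm)
  rw [le_div_iff₀' (by exact_mod_cast hq)]
  exact_mod_cast (Nat.mul_le_mul_left q (sum_card_colorClass_some_inter_le c _)).trans hclose

variable [DecidableEq ι]

/-- The number of pairs `(x, y)` in different classes `i`, `j` such that `x` and the representative
`r i` are joined differently to the representative `r j`. -/
def crossCost (G : SimpleGraph V) (c : V → Option ι) (r : ι → V) : ℝ :=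
  ∑ ij ∈ univ.offDiag, (#(colorClass c (some ij.2)) : ℝ) *
    #{x ∈ colorClass c (some ij.1) | r ij.2 ∈ nbhdDiff G x (r ij.1)}

lemma expect_crossCost_le_sum {c : V → Option ι} {S : ι → Finset V} (hne : ∀ i, (S i).Nonempty)
    (hS : ∀ i, S i ⊆ colorClass c (some i))
    (hcard : ∀ i, #(colorClass c (some i)) ≤ 2 * #(S i)) :
    𝔼 r ∈ Fintype.piFinset S, crossCost G c r ≤
      ∑ i, ∑ j, 𝔼 a ∈ S i, ∑ x ∈ colorClass c (some i),
        2 * (#{b ∈ colorClass c (some j) | b ∈ nbhdDiff G x a} : ℝ) := by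
  rw [← sum_product']
  unfold crossCost
  rw [expect_sum_comm]
  refine (sum_le_sum fun ij hij => ?_).trans (sum_le_sum_of_subset_of_nonneg
    (fun _ _ => mem_univ _) fun _ _ _ => expect_nonneg fun _ _ => by positivity)
  rw [expect_piFinset_eval₂ hne (mem_offDiag.1 hij).2.2 fun a b =>
    (#(colorClass c (some ij.2)) : ℝ) * #{x ∈ colorClass c (some ij.1) | b ∈ nbhdDiff G x a}]
  exact expect_le_expect fun a _ =>
    expect_card_mul_card_filter_le _ (hne ij.2) (hS ij.2) (hcard ij.2)

lemma IsClustering.expect_crossCost_le {q W : ℕ} {c : V → Option ι} (hc : IsClustering G q W c)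
    (hq : 0 < q) {S : ι → Finset V} (hne : ∀ i, (S i).Nonempty)
    (hS : ∀ i, S i ⊆ colorClass c (some i))
    (hcard : ∀ i, #(colorClass c (some i)) ≤ 2 * #(S i)) :
    𝔼 r ∈ Fintype.piFinset S, crossCost G c r ≤ 2 * (Fintype.card V : ℝ) ^ 2 / q := by
  have hn : (∑ i, #(colorClass c (some i)) : ℝ) ≤ Fintype.card V := by
    exact_mod_cast sum_card_colorClass_some_le c
  calc 𝔼 r ∈ Fintype.piFinset S, crossCost G c r
      ≤ ∑ i, ∑ j, 𝔼 a ∈ S i, ∑ x ∈ colorClass c (some i),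
          2 * (#{b ∈ colorClass c (some j) | b ∈ nbhdDiff G x a} : ℝ) :=
        expect_crossCost_le_sum hne hS hcard
    _ ≤ ∑ i, #(colorClass c (some i)) * (2 * (Fintype.card V / q) : ℝ) :=
        sum_le_sum fun i _ => by
          rw [← expect_sum_comm]
          refine expect_le (hne i) fun a ha => ?_
          rw [sum_comm, ← nsmul_eq_mul]
          refine sum_le_card_nsmul _ _ _ fun x hx => ?_
          rw [← mul_sum]
          gcongr
          exact hc.sum_card_nbhdDiff_filter_le hq hx (hS i ha)
    _ ≤ Fintype.card V * (2 * (Fintype.card V / q)) := by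
        rw [← sum_mul]
        gcongr
    _ = 2 * (Fintype.card V : ℝ) ^ 2 / q := by ring

end Representatives

section BlowUp

variable {V ι κ α : Type*} [Fintype V] [Fintype ι] {G : SimpleGraph V}
  {q W q' W' : ℕ} {c : V → Option ι} {e : V → Option κ}

lemma IsClustering.card_nbhdDiff_le (he : IsClustering G q' W' e) (hq' : 0 < q') {x y : V}
    (hx : e x ≠ none) (hxy : e x = e y) : (#(nbhdDiff G x y) : ℝ) ≤ Fintype.card V / q' := by
  rw [le_div_iff₀' (by exact_mod_cast hq')]
  exact_mod_cast he.close x y hx hxy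

lemma IsClustering.expect_sum_disagreeProb_le [DecidableEq ι] [Nonempty V]
    (he : IsClustering G q' W' e) (hq' : 0 < q') {S : ι → Finset V}
    (hS : ∀ i, ∀ a ∈ S i, e a ≠ none) {M : ℕ} (hcard : ∀ i, Fintype.card V ≤ M * #(S i)) :
    𝔼 r ∈ Fintype.piFinset S, ∑ ij ∈ univ.offDiag, disagreeProb G e (r ij.1) (r ij.2) ≤
      (Fintype.card ι : ℝ) ^ 2 * (2 * M / q') := by
  have hne (i : ι) : (S i).Nonempty :=
    card_pos.1 (pos_of_mul_pos_right (Fintype.card_pos.trans_le (hcard i)) M.zero_le)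
  have hdiv (i : ι) : (Fintype.card V / q' : ℝ) / #(S i) ≤ M / q' := by
    have hSi : (0 : ℝ) < #(S i) := by exact_mod_cast (hne i).card_pos
    rw [div_right_comm]
    gcongr
    rw [div_le_iff₀ hSi]
    exact_mod_cast hcard i
  have hclose (i : ι) : ∀ a ∈ S i, ∀ w, e w = e a →
      (#(nbhdDiff G w a) : ℝ) ≤ Fintype.card V / q' := fun a ha w hw =>
    he.card_nbhdDiff_le hq' (hw ▸ hS i a ha) hw
  have hpair : ∀ ij ∈ (univ : Finset ι).offDiag,
      𝔼 r ∈ Fintype.piFinset S, disagreeProb G e (r ij.1) (r ij.2) ≤ 2 * M / q' := by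
    intro ij hij
    rw [expect_piFinset_eval₂ hne (mem_offDiag.1 hij).2.2 (disagreeProb G e)]
    refine (expect_disagreeProb_le (hne _) (hne _) (hclose _) (hclose _)).trans ?_
    calc _ ≤ (M / q' + M / q' : ℝ) := add_le_add (hdiv _) (hdiv _)
      _ = 2 * M / q' := by ring
  have hoff : (#(univ : Finset ι).offDiag : ℝ) ≤ (Fintype.card ι : ℝ) ^ 2 := by
    rw [← Nat.cast_pow, sq, ← Fintype.card_prod]
    exact_mod_cast card_le_univ _
  rw [expect_sum_comm]
  refine (sum_le_card_nsmul _ _ _ hpair).trans ?_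
  rw [nsmul_eq_mul]
  gcongr

lemma IsClustering.exists_representatives [Nonempty V] (hc : IsClustering G q W c)
    (he : IsClustering G q' W' e) (hq : 0 < q) (hW : 0 < W) (hq' : 2 * W ≤ q') :
    ∃ r : ι → V, (∀ i, c (r i) = some i) ∧ (∀ i, e (r i) ≠ none) ∧
      crossCost G c r ≤ 4 * (Fintype.card V : ℝ) ^ 2 / q ∧
      ∑ ij ∈ univ.offDiag, disagreeProb G e (r ij.1) (r ij.2) ≤ 8 * (W : ℝ) ^ 3 / q' := by
  let S (i : ι) : Finset V := colorClass c (some i) \ colorClass e none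
  have hSsub (i : ι) : S i ⊆ colorClass c (some i) := sdiff_subset
  have hq0 : 0 < q' := by omega
  have hhalf (i : ι) : #(colorClass c (some i)) ≤ 2 * #(S i) := by
    have hsplit : #(colorClass c (some i)) ≤ #(S i) + #(colorClass e none) := by
      rw [add_comm]
      exact card_le_card_sdiff_add_card.trans_eq (add_comm _ _)
    have hexc : W * (2 * #(colorClass e none)) ≤ W * #(colorClass c (some i)) :=
      calc W * (2 * #(colorClass e none)) = 2 * W * #(colorClass e none) := by ring
        _ ≤ q' * #(colorClass e none) := Nat.mul_le_mul_right _ hq'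
        _ ≤ W * #(colorClass c (some i)) := he.card_none_le.trans (hc.le_card i)
    have := Nat.le_of_mul_le_mul_left hexc hW
    omega
  have hcard (i : ι) : Fintype.card V ≤ 2 * W * #(S i) :=
    (hc.le_card i).trans ((Nat.mul_le_mul_left W (hhalf i)).trans_eq (by ring))
  have hne (i : ι) : (S i).Nonempty :=
    card_pos.1 (pos_of_mul_pos_right (Fintype.card_pos.trans_le (hcard i)) (Nat.zero_le _))
  have hV : (0 : ℝ) < Fintype.card V := by exact_mod_cast Fintype.card_pos
  have hcost := hc.expect_crossCost_le hq hne hSsub hhalf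
  have hdis : 𝔼 r ∈ Fintype.piFinset S, ∑ ij ∈ univ.offDiag,
      disagreeProb G e (r ij.1) (r ij.2) ≤ 4 * (W : ℝ) ^ 3 / q' := by
    refine (he.expect_sum_disagreeProb_le hq0 (fun i a ha hnone => ?_) hcard).trans ?_
    · exact (mem_sdiff.1 ha).2 (mem_colorClass.2 hnone)
    · calc (Fintype.card ι : ℝ) ^ 2 * (2 * (2 * W : ℕ) / q')
          ≤ (W : ℝ) ^ 2 * (2 * (2 * W : ℕ) / q') := by
            gcongr
            exact_mod_cast hc.card_index_le
        _ = 4 * (W : ℝ) ^ 3 / q' := by push_cast; ring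
  obtain ⟨r, hr, hrcost, hrdis⟩ := exists_le_two_mul_of_expect_le (Fintype.piFinset_nonempty.2 hne)
    (fun r _ => sum_nonneg fun _ _ => by positivity)
    (fun r _ => sum_nonneg fun _ _ => disagreeProb_nonneg e _ _) (by positivity) (by positivity)
    hcost hdis
  have hrS (i : ι) := mem_sdiff.1 (Fintype.mem_piFinset.1 hr i)
  exact ⟨r, fun i => mem_colorClass.1 (hrS i).1, fun i h => (hrS i).2 (mem_colorClass.2 h),
    hrcost.trans_eq (by ring), hrdis.trans_eq (by ring)⟩

variable [Fintype α]

lemma uniformProb_exists_disagree_le [DecidableEq ι] [DecidableEq α] (e : V → κ) (r : ι → V) :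
    uniformProb (Fintype.piFinset fun a : ι × α => colorClass e (e (r a.1)))
      (fun w => ∃ s ∈ (univ : Finset ι).offDiag ×ˢ (univ : Finset (α × α)),
        ¬ (G.Adj (w (s.1.1, s.2.1)) (w (s.1.2, s.2.2)) ↔ G.Adj (r s.1.1) (r s.1.2))) ≤
      (Fintype.card α : ℝ) ^ 2 * ∑ ij ∈ univ.offDiag, disagreeProb G e (r ij.1) (r ij.2) := by
  have hne (a : ι × α) : (colorClass e (e (r a.1))).Nonempty := ⟨r a.1, mem_colorClass.2 rfl⟩
  have hpair : ∀ s ∈ (univ : Finset ι).offDiag ×ˢ (univ : Finset (α × α)),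
      uniformProb (Fintype.piFinset fun a : ι × α => colorClass e (e (r a.1)))
        (fun w => ¬ (G.Adj (w (s.1.1, s.2.1)) (w (s.1.2, s.2.2)) ↔ G.Adj (r s.1.1) (r s.1.2))) =
      disagreeProb G e (r s.1.1) (r s.1.2) := by
    intro s hs
    have hij : (s.1.1, s.2.1) ≠ (s.1.2, s.2.2) := fun h =>
      (mem_offDiag.1 (mem_product.1 hs).1).2.2 (congrArg Prod.fst h)
    exact expect_piFinset_eval₂ hne hij fun w w' => @ite ℝ
      (¬ (G.Adj w w' ↔ G.Adj (r s.1.1) (r s.1.2))) (Classical.propDecidable _) 1 0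
  refine (uniformProb_exists_le _ _).trans_eq ?_
  rw [sum_congr rfl hpair, sum_product]
  simp only [sum_const, card_univ, Fintype.card_prod, nsmul_eq_mul, ← mul_sum, Nat.cast_mul, sq]

lemma IsClustering.exists_blowUp [Nonempty V] [Nonempty ι] [Nonempty α] {𝓕 : Finset FinGraph}
    {k : ℕ} (hk : ∀ p ∈ 𝓕, p.1 ≤ k) {δ : ℝ} (hδ : ∀ p ∈ 𝓕, inducedDensity p.2 G ≤ δ)
    (he : IsClustering G q' W' e) {r : ι → V} (hr : ∀ i, e (r i) ≠ none)
    (hlt : (Fintype.card α : ℝ) ^ 2 * ∑ ij ∈ univ.offDiag, disagreeProb G e (r ij.1) (r ij.2) +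
      #𝓕 * (Fintype.card (ι × α) * W') ^ k * δ < 1) :
    ∃ w : ι × α → V, (∀ a, e (w a) = e (r a.1)) ∧
      (∀ a b, a.1 ≠ b.1 → (G.Adj (w a) (w b) ↔ G.Adj (r a.1) (r b.1))) ∧
      FamilyFree (𝓕 : Set FinGraph) (G.comap w) := by
  let T (a : ι × α) : Finset V := colorClass e (e (r a.1))
  have hT (a : ι × α) : Fintype.card V ≤ W' * #(T a) := by
    obtain ⟨j, hj⟩ := Option.ne_none_iff_exists'.1 (hr a.1)
    simpa only [T, hj] using he.le_card j
  have hne : (Fintype.piFinset T).Nonempty :=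
    Fintype.piFinset_nonempty.2 fun a => ⟨r a.1, mem_colorClass.2 rfl⟩
  obtain ⟨w, hw, hgood⟩ := exists_not_of_uniformProb_lt_one hne
    (((uniformProb_or_le _ _).trans (add_le_add (uniformProb_exists_disagree_le e r)
      (uniformProb_not_familyFree_comap_le hk hδ hT))).trans_lt hlt)
  rw [not_or, not_not] at hgood
  refine ⟨w, fun a => mem_colorClass.1 (Fintype.mem_piFinset.1 hw a), fun a b hab => ?_, hgood.2⟩
  by_contra hdis
  exact hgood.1 ⟨((a.1, b.1), (a.2, b.2)),
    mem_product.2 ⟨mem_offDiag.2 ⟨mem_univ _, mem_univ _, hab⟩, mem_univ _⟩, hdis⟩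

end BlowUp

section CleanedGraph

variable {V W ι : Type*}

/-- The graph on `V` in which vertices of different colours are joined as the representatives `r`
of their colours are in `G`, and each colour class `i` is a clique or an independent set according
to `h i`. -/
def cleanedGraph (G : SimpleGraph W) (φ : V → ι) (r : ι → W) (h : ι → Prop) : SimpleGraph V :=
  G.comap (r ∘ φ) ⊔ SimpleGraph.fromRel fun x y => φ x = φ y ∧ h (φ x)

variable {G : SimpleGraph W} {φ : V → ι} {r : ι → W} {h : ι → Prop} {x y : V}

lemma cleanedGraph_adj_of_ne (hφ : φ x ≠ φ y) :
    (cleanedGraph G φ r h).Adj x y ↔ G.Adj (r (φ x)) (r (φ y)) := by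
  simp only [cleanedGraph, SimpleGraph.sup_adj, SimpleGraph.comap_adj, Function.comp_apply,
    SimpleGraph.fromRel_adj, hφ, hφ.symm, false_and, or_self, and_false, or_false]

lemma cleanedGraph_adj_of_eq (hxy : x ≠ y) (hφ : φ x = φ y) :
    (cleanedGraph G φ r h).Adj x y ↔ h (φ x) := by
  simp only [cleanedGraph, SimpleGraph.sup_adj, SimpleGraph.comap_adj, Function.comp_apply,
    SimpleGraph.fromRel_adj, hφ, SimpleGraph.irrefl, true_and, or_self, ne_eq, hxy,
    not_false_eq_true, false_or]

lemma exists_familyFree_cleanedGraph {𝓕 : Set FinGraph} {k : ℕ} (hk : ∀ p ∈ 𝓕, p.1 ≤ k)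
    (w : ι × Fin (2 ^ (2 * k)) → W)
    (hw : ∀ a b, a.1 ≠ b.1 → (G.Adj (w a) (w b) ↔ G.Adj (r a.1) (r b.1)))
    (hfree : FamilyFree 𝓕 (G.comap w)) (φ : V → ι) :
    ∃ h, FamilyFree 𝓕 (cleanedGraph G φ r h) := by
  have hramsey (i : ι) := exists_homogeneous_embedding (G.comap fun a => w (i, a)) (Fin k) univ
    (by rw [Fintype.card_fin, card_univ, Fintype.card_fin])
  choose h τ _ hτ using hramsey
  refine ⟨h, fun p hp => ⟨fun f => (hfree p hp).false ?_⟩⟩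
  let σ (u : Fin p.1) : ι × Fin (2 ^ (2 * k)) :=
    (φ (f u), τ (φ (f u)) (Fin.castLE (hk p hp) u))
  have hσ : σ.Injective := fun u v huv => by
    obtain ⟨hφ, hτuv⟩ := Prod.mk.inj huv
    rw [hφ] at hτuv
    exact Fin.castLE_injective _ ((τ _).injective hτuv)
  refine ⟨⟨σ, hσ⟩, fun {u v} => ?_⟩
  rcases eq_or_ne u v with rfl | huv
  · exact iff_of_false (SimpleGraph.irrefl _) (SimpleGraph.irrefl _)
  · rw [← f.map_adj_iff]
    by_cases hφ : φ (f u) = φ (f v)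
    · rw [cleanedGraph_adj_of_eq (f.injective.ne huv) hφ,
        ← hτ _ _ _ ((Fin.castLE_injective (hk p hp)).ne huv)]
      simp only [σ, Function.Embedding.coeFn_mk, SimpleGraph.comap_adj, hφ]
    · rw [cleanedGraph_adj_of_ne hφ]
      exact hw _ _ hφ

end CleanedGraph

section EditDistance

/-- The ordered vertex pairs on which two graphs on the same vertex set differ. -/
def editPairs {V : Type*} [Fintype V] (G H : SimpleGraph V) : Finset (V × V) :=
  {z | ¬ (G.Adj z.1 z.2 ↔ H.Adj z.1 z.2)}

lemma editDist_le_card_editPairs {n : ℕ} (G H : SimpleGraph (Fin n)) :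
    editDist G H ≤ #(editPairs G H) := by
  calc editDist G H
      ≤ (((editPairs G H).image fun z => s(z.1, z.2) : Finset _) : Set (Sym2 (Fin n))).ncard := by
        refine Set.ncard_le_ncard (fun e he => ?_) (finite_toSet _)
        induction e with
        | _ x y =>
          rw [mem_coe, mem_image]
          refine ⟨(x, y), mem_filter.2 ⟨mem_univ _, fun hiff => ?_⟩, rfl⟩
          exact he.elim (fun h => h.2 (hiff.1 h.1)) fun h => h.1 (hiff.2 h.2)
    _ ≤ #(editPairs G H) := by
        rw [Set.ncard_coe_finset]
        exact card_image_le

variable {V ι : Type*} [Fintype V] {G : SimpleGraph V} {q W : ℕ} {c : V → Option ι} {φ : V → ι}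
  {r : ι → V} {h : ι → Prop}

lemma adj_iff_cleanedGraph_adj {x y : V} {i j : ι} (hx : φ x = i) (hy : φ y = j) (hij : i ≠ j)
    (hyr : x ∉ nbhdDiff G y (r j)) (hxr : r j ∉ nbhdDiff G x (r i)) :
    G.Adj x y ↔ (cleanedGraph G φ r h).Adj x y := by
  subst hx hy
  rw [mem_nbhdDiff, not_not] at hyr hxr
  rw [cleanedGraph_adj_of_ne hij, ← hxr, G.adj_comm x, G.adj_comm x, hyr]

variable [Fintype ι]

lemma IsClustering.mul_card_biUnion_colorClass_product_le (hc : IsClustering G q W c) :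
    q * #(univ.biUnion fun i => colorClass c (some i) ×ˢ colorClass c (some i)) ≤
      Fintype.card V ^ 2 := by
  calc q * #(univ.biUnion fun i => colorClass c (some i) ×ˢ colorClass c (some i))
      ≤ q * ∑ i, #(colorClass c (some i) ×ˢ colorClass c (some i)) :=
        Nat.mul_le_mul_left _ card_biUnion_le
    _ = ∑ i, q * #(colorClass c (some i)) * #(colorClass c (some i)) := by
        simp only [mul_sum, card_product, mul_assoc]
    _ ≤ ∑ i, Fintype.card V * #(colorClass c (some i)) :=
        sum_le_sum fun i _ => Nat.mul_le_mul_right _ (hc.card_le i)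
    _ ≤ Fintype.card V ^ 2 := by
        rw [← mul_sum, sq]
        exact Nat.mul_le_mul_left _ (sum_card_colorClass_some_le c)

lemma IsClustering.mul_card_biUnion_nbhdDiff_product_le (hc : IsClustering G q W c)
    (hr : ∀ i, c (r i) = some i) :
    q * #(univ.biUnion fun j => (colorClass c (some j)).biUnion
      fun y => nbhdDiff G y (r j) ×ˢ {y}) ≤ Fintype.card V ^ 2 := by
  have hclass (j : ι) : q * #((colorClass c (some j)).biUnion
      fun y => nbhdDiff G y (r j) ×ˢ {y}) ≤ #(colorClass c (some j)) * Fintype.card V := by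
    refine (Nat.mul_le_mul_left _ card_biUnion_le).trans ?_
    rw [mul_sum, ← smul_eq_mul]
    refine sum_le_card_nsmul _ _ _ fun y hy => ?_
    have hyj := mem_colorClass.1 hy
    rw [card_product, card_singleton, mul_one]
    exact hc.close y (r j) (hyj ▸ Option.some_ne_none j) (hyj.trans (hr j).symm)
  calc _ ≤ q * ∑ j, #((colorClass c (some j)).biUnion fun y => nbhdDiff G y (r j) ×ˢ {y}) :=
        Nat.mul_le_mul_left _ card_biUnion_le
    _ ≤ ∑ j, #(colorClass c (some j)) * Fintype.card V := by
        rw [mul_sum]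
        exact sum_le_sum fun j _ => hclass j
    _ ≤ Fintype.card V ^ 2 := by
        rw [← sum_mul, sq]
        exact Nat.mul_le_mul_right _ (sum_card_colorClass_some_le c)

lemma card_biUnion_cross_le_crossCost (G : SimpleGraph V) (c : V → Option ι) (r : ι → V) :
    (#(univ.offDiag.biUnion fun ij : ι × ι => {x ∈ colorClass c (some ij.1) |
      r ij.2 ∈ nbhdDiff G x (r ij.1)} ×ˢ colorClass c (some ij.2)) : ℝ) ≤ crossCost G c r := by
  refine (Nat.cast_le.2 card_biUnion_le).trans_eq ?_
  unfold crossCost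
  rw [Nat.cast_sum]
  refine sum_congr rfl fun ij _ => ?_
  rw [card_product, mul_comm, Nat.cast_mul]

lemma editPairs_cleanedGraph_subset (hφ : ∀ x i, c x = some i → φ x = i) :
    editPairs G (cleanedGraph G φ r h) ⊆
      colorClass c none ×ˢ univ ∪ univ ×ˢ colorClass c none ∪
        univ.biUnion (fun i => colorClass c (some i) ×ˢ colorClass c (some i)) ∪
        univ.biUnion (fun j => (colorClass c (some j)).biUnion
          fun y => nbhdDiff G y (r j) ×ˢ {y}) ∪
        univ.offDiag.biUnion fun ij : ι × ι => {x ∈ colorClass c (some ij.1) |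
          r ij.2 ∈ nbhdDiff G x (r ij.1)} ×ˢ colorClass c (some ij.2) := by
  rintro ⟨x, y⟩ hxy
  contrapose! hxy
  simp only [mem_union, mem_product, mem_biUnion, mem_colorClass, mem_univ, and_true, true_and,
    mem_singleton, mem_filter, mem_offDiag, not_or, not_exists, not_and] at hxy
  obtain ⟨⟨⟨⟨hx, hy⟩, hsame⟩, hyr⟩, hxr⟩ := hxy
  obtain ⟨i, hi⟩ := Option.ne_none_iff_exists'.1 hx
  obtain ⟨j, hj⟩ := Option.ne_none_iff_exists'.1 hy
  have hij : i ≠ j := fun hij => hsame i hi (hij ▸ hj)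
  refine fun hmem => (mem_filter.1 hmem).2 (adj_iff_cleanedGraph_adj (hφ x i hi) (hφ y j hj) hij
    (fun h => hyr j y hj h rfl) fun h => hxr (i, j) hij ⟨hi, h⟩ hj)

lemma card_union₅_le {α : Type*} [DecidableEq α] (s₁ s₂ s₃ s₄ s₅ : Finset α) :
    #(s₁ ∪ s₂ ∪ s₃ ∪ s₄ ∪ s₅) ≤ #s₁ + #s₂ + #s₃ + #s₄ + #s₅ := by
  grw [card_union_le, card_union_le, card_union_le, card_union_le]

lemma IsClustering.card_editPairs_cleanedGraph_le (hc : IsClustering G q W c) (hq : 0 < q)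
    (hφ : ∀ x i, c x = some i → φ x = i) (hr : ∀ i, c (r i) = some i) :
    (#(editPairs G (cleanedGraph G φ r h)) : ℝ) ≤
      4 * (Fintype.card V : ℝ) ^ 2 / q + crossCost G c r := by
  have hq' : (0 : ℝ) < q := by exact_mod_cast hq
  have hdiv {m : ℕ} (hm : q * m ≤ Fintype.card V ^ 2) : (m : ℝ) ≤ (Fintype.card V : ℝ) ^ 2 / q := by
    rw [le_div_iff₀' hq']
    exact_mod_cast hm
  have hnone : q * (#(colorClass c none) * Fintype.card V) ≤ Fintype.card V ^ 2 := by
    rw [← mul_assoc, sq]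
    exact Nat.mul_le_mul_right _ hc.card_none_le
  refine (Nat.cast_le.2 (card_le_card (editPairs_cleanedGraph_subset hφ))).trans ?_
  calc _ ≤ (_ : ℝ) := Nat.cast_le.2 (card_union₅_le _ _ _ _ _)
    _ ≤ (Fintype.card V : ℝ) ^ 2 / q + (Fintype.card V : ℝ) ^ 2 / q +
          (Fintype.card V : ℝ) ^ 2 / q + (Fintype.card V : ℝ) ^ 2 / q + crossCost G c r := by
        simp only [Nat.cast_add]
        gcongr
        · exact hdiv (by rwa [card_product, card_univ])
        · exact hdiv (by rwa [card_product, card_univ, mul_comm (Fintype.card V)])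
        · exact hdiv hc.mul_card_biUnion_colorClass_product_le
        · exact hdiv (hc.mul_card_biUnion_nbhdDiff_product_le hr)
        · exact card_biUnion_cross_le_crossCost G c r
    _ = _ := by ring

end EditDistance

section Removal

universe u

/-- The polynomial induced removal lemma for `𝓕`: graphs in which the members of `𝓕` have
polynomially small density can be made induced `𝓕`-free by changing few adjacencies. -/
def HasPolynomialRemoval (𝓕 : Finset FinGraph) : Prop :=
  ∃ C, ∀ q ≥ 2, ∀ (V : Type u) [Fintype V] (G : SimpleGraph V), q ^ C ≤ Fintype.card V →
    (∀ p ∈ 𝓕, inducedDensity p.2 G ≤ ((q : ℝ) ^ C)⁻¹) →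
    ∃ H, FamilyFree (𝓕 : Set FinGraph) H ∧ q * #(editPairs G H) < Fintype.card V ^ 2

variable {V : Type*} [Fintype V] [Nonempty V] {G : SimpleGraph V}

lemma IsClustering.exists_ne_none {ι : Type*} {q W : ℕ} {c : V → Option ι}
    (hc : IsClustering G q W c) (hq : 1 < q) : ∃ x, c x ≠ none := by
  by_contra! hnone
  have hall : colorClass c none = univ := eq_univ_of_forall fun x => mem_colorClass.2 (hnone x)
  have hle := hc.card_none_le
  rw [hall, card_univ] at hle
  exact (lt_mul_left Fintype.card_pos hq).not_ge hle

lemma IsClustering.exists_familyFree {ι κ : Type*} [Finite ι] {𝓕 : Finset FinGraph} {k : ℕ}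
    (hk : ∀ p ∈ 𝓕, p.1 ≤ k) {δ : ℝ} (hδ₀ : 0 ≤ δ) (hδ : ∀ p ∈ 𝓕, inducedDensity p.2 G ≤ δ)
    {q W q' W' : ℕ} {c : V → Option ι} {e : V → Option κ} (hc : IsClustering G q W c)
    (he : IsClustering G q' W' e) (hq : 1 < q) (hW : 0 < W) (hq' : 2 * W ≤ q')
    (hlt : ((2 ^ (2 * k) : ℕ) : ℝ) ^ 2 * (8 * W ^ 3 / q') +
      #𝓕 * (W * (2 ^ (2 * k) : ℕ) * W') ^ k * δ < 1) :
    ∃ H, FamilyFree (𝓕 : Set FinGraph) H ∧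
      (#(editPairs G H) : ℝ) ≤ 8 * (Fintype.card V : ℝ) ^ 2 / q := by
  have := Fintype.ofFinite ι
  obtain ⟨x, hx⟩ := hc.exists_ne_none hq
  obtain ⟨i₀, -⟩ := Option.ne_none_iff_exists'.1 hx
  have : Nonempty ι := ⟨i₀⟩
  obtain ⟨r, hrc, hre, hcost, hdis⟩ := hc.exists_representatives he (by omega) hW hq'
  obtain ⟨w, -, hw, hfree⟩ := he.exists_blowUp (α := Fin (2 ^ (2 * k))) hk hδ hre <| by
    refine lt_of_le_of_lt ?_ hlt
    rw [Fintype.card_prod, Fintype.card_fin]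
    rw [Nat.cast_mul]
    gcongr
    exact hc.card_index_le
  obtain ⟨h, hH⟩ := exists_familyFree_cleanedGraph hk w hw hfree fun x => (c x).getD i₀
  refine ⟨_, hH, (hc.card_editPairs_cleanedGraph_le (by omega) (fun x i hi => ?_) hrc).trans ?_⟩
  · rw [hi, Option.getD_some]
  · calc 4 * (Fintype.card V : ℝ) ^ 2 / q + crossCost G c r
        ≤ 4 * (Fintype.card V : ℝ) ^ 2 / q + 4 * (Fintype.card V : ℝ) ^ 2 / q := by gcongr
      _ = 8 * (Fintype.card V : ℝ) ^ 2 / q := by ring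

lemma blowUp_error_lt_one {R W q' W' F k N : ℕ} (hR : 0 < R) (hW : 0 < W)
    (hq' : 32 * R ^ 2 * W ^ 3 ≤ q') (hN : 0 < N) (hF : 4 * F * (W * R * W') ^ k ≤ N) :
    (R : ℝ) ^ 2 * (8 * W ^ 3 / q') + F * (W * R * W') ^ k * (N : ℝ)⁻¹ < 1 := by
  have hq'_pos : 0 < q' := (by positivity : 0 < 32 * R ^ 2 * W ^ 3).trans_le hq'
  have hdis : (R : ℝ) ^ 2 * (8 * W ^ 3 / q') ≤ 1 / 4 := by
    rw [← mul_div_assoc, div_le_div_iff₀ (by positivity) (by norm_num)]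
    calc (R : ℝ) ^ 2 * (8 * W ^ 3) * 4 = (32 * R ^ 2 * W ^ 3 : ℕ) := by push_cast; ring
      _ ≤ 1 * (q' : ℝ) := by rw [one_mul]; exact_mod_cast hq'
  have hcopy : F * (W * R * W') ^ k * (N : ℝ)⁻¹ ≤ 1 / 4 := by
    rw [← div_eq_mul_inv, div_le_div_iff₀ (by positivity) (by norm_num)]
    calc F * (W * R * W' : ℝ) ^ k * 4 = (4 * F * (W * R * W') ^ k : ℕ) := by push_cast; ring
      _ ≤ 1 * (N : ℝ) := by rw [one_mul]; exact_mod_cast hF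
  linarith

lemma HasPolynomialTraces.hasPolynomialRemoval {𝓕 : Finset FinGraph} {d k : ℕ}
    (hd : HasPolynomialTraces (𝓕 : Set FinGraph) d) (hk : ∀ p ∈ 𝓕, p.1 ≤ k) :
    HasPolynomialRemoval.{u} 𝓕 := by
  obtain ⟨D, hD⟩ := hd.exists_isClustering hk
  let R : ℕ := 2 ^ (2 * k)
  let W (q : ℕ) : ℕ := (10 * q) ^ D
  let q' (q : ℕ) : ℕ := 32 * R ^ 2 * W q ^ 3
  have hW : PolyBounded W := ((PolyBounded.const 10).mul .id).pow D
  have hq' : PolyBounded q' := (PolyBounded.const (32 * R ^ 2)).mul (hW.pow 3)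
  have hcount : PolyBounded fun q => 4 * #𝓕 * (W q * R * q' q ^ D) ^ k :=
    (PolyBounded.const (4 * #𝓕)).mul (((hW.mul (.const R)).mul (hq'.pow D)).pow k)
  obtain ⟨C, hC⟩ := (hW.add (hq'.pow D)).add hcount
  refine ⟨C, fun q hq V _ G hn hδ => ?_⟩
  have hCq : W q + q' q ^ D + 4 * #𝓕 * (W q * R * q' q ^ D) ^ k ≤ q ^ C := hC q hq
  have : Nonempty V := Fintype.card_pos_iff.1 ((by positivity : 0 < q ^ C).trans_le hn)
  have hW0 : 0 < W q := by positivity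
  have hWq' : 2 * W q ≤ q' q :=
    Nat.mul_le_mul ((by norm_num : 2 ≤ 32).trans (Nat.le_mul_of_pos_right _ (by positivity)))
      (Nat.le_self_pow three_ne_zero _)
  have hclus {s : ℕ} (hs : 2 ≤ s) (hsC : s ^ D ≤ q ^ C) :
      ∃ (ι : Type u) (_ : Fintype ι) (c : V → Option ι), IsClustering G s (s ^ D) c :=
    hD s hs V G (hsC.trans hn) fun p hp => (hδ p hp).trans (by gcongr; exact_mod_cast hsC)
  obtain ⟨ι, _, c, hc⟩ := hclus (s := 10 * q) (by omega) (by unfold W at hCq; omega)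
  obtain ⟨κ, _, e, he⟩ := hclus (s := q' q) (by omega) (by omega)
  have hlt := blowUp_error_lt_one (by positivity : 0 < R) hW0 le_rfl (by positivity)
    ((Nat.le_add_left _ _).trans hCq)
  rw [Nat.cast_pow q] at hlt
  obtain ⟨H, hH, hedit⟩ :=
    hc.exists_familyFree hk (by positivity) hδ he (by omega) hW0 hWq' hlt
  refine ⟨H, hH, ?_⟩
  have hV : (0 : ℝ) < (Fintype.card V : ℝ) ^ 2 := by positivity
  rw [← Nat.cast_lt (α := ℝ)]
  push_cast at hedit ⊢
  calc (q : ℝ) * #(editPairs G H) ≤ q * (8 * (Fintype.card V : ℝ) ^ 2 / (10 * q)) := by gcongr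
    _ = 4 / 5 * (Fintype.card V : ℝ) ^ 2 := by field_simp; norm_num
    _ < (Fintype.card V : ℝ) ^ 2 := by linarith

end Removal

section SubsetSampling

variable {V ι : Type*} [Fintype V]

lemma expect_smul_eq_expect {Γ X : Type*} [Group Γ] [Fintype Γ] [MulAction Γ X]
    [MulAction.IsPretransitive Γ X] [Fintype X] (f : X → ℝ) (x₀ : X) :
    𝔼 g : Γ, f (g • x₀) = 𝔼 x, f x := by
  have : Nonempty X := ⟨x₀⟩
  have hbase (x : X) : 𝔼 g : Γ, f (g • x) = 𝔼 g : Γ, f (g • x₀) := by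
    obtain ⟨h, rfl⟩ := MulAction.exists_smul_eq Γ x₀ x
    exact Fintype.expect_equiv (Equiv.mulRight h) _ _ fun g => by
      rw [Equiv.coe_mulRight, mul_smul]
  calc 𝔼 g : Γ, f (g • x₀) = 𝔼 _x : X, 𝔼 g : Γ, f (g • x₀) :=
        (expect_const univ_nonempty _).symm
    _ = 𝔼 x : X, 𝔼 g : Γ, f (g • x) := expect_congr rfl fun x _ => (hbase x).symm
    _ = 𝔼 g : Γ, 𝔼 x : X, f (g • x) := expect_comm _ _ _
    _ = 𝔼 _g : Γ, 𝔼 x : X, f x := expect_congr rfl fun g _ =>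
        Fintype.expect_equiv (MulAction.toPerm g) _ _ fun _ => rfl
    _ = 𝔼 x, f x := expect_const univ_nonempty _

lemma expect_powersetCard_eq_expect_perm [DecidableEq V] (f : Finset V → ℝ) (Q : Finset V) :
    𝔼 R ∈ powersetCard #Q univ, f R = 𝔼 π : Equiv.Perm V, f (Q.image π) := by
  have := Set.powersetCard.isPretransitive (α := V) (n := #Q)
  calc 𝔼 R ∈ powersetCard #Q univ, f R = 𝔼 R : Set.powersetCard V #Q, f R :=
        expect_bij' (fun R hR => ⟨R, (mem_powersetCard.1 hR).2⟩) (fun R _ => R)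
          (fun _ _ => mem_univ _) (fun R _ => mem_powersetCard.2 ⟨subset_univ _, R.2⟩)
          (fun _ _ => rfl) (fun _ _ => rfl) (fun _ _ => rfl)
    _ = 𝔼 π : Equiv.Perm V, f (π • (⟨Q, rfl⟩ : Set.powersetCard V #Q) : Set.powersetCard V #Q) :=
        (expect_smul_eq_expect (fun R : Set.powersetCard V #Q => f R) _).symm
    _ = 𝔼 π : Equiv.Perm V, f (Q.image π) := expect_congr rfl fun π _ => by
        rw [Set.powersetCard.coe_smul]; rfl

variable [Nonempty V] [Fintype ι] [DecidableEq ι]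

lemma uniformProb_powersetCard_le_of_antitone [DecidableEq V] {P : Finset V → Prop}
    (hP : Antitone P) {m : ℕ} (hιm : Fintype.card ι ≤ m) (hmV : m ≤ Fintype.card V) :
    uniformProb (powersetCard m univ) P ≤ uniformProb univ (fun x : ι → V => P (univ.image x)) := by
  have hcover (x : ι → V) : ∃ Q, univ.image x ⊆ Q ∧ #Q = m :=
    exists_superset_card_eq (card_image_le.trans hιm) hmV
  choose Q hQ hQm using hcover
  simp only [uniformProb]
  calc 𝔼 R ∈ powersetCard m univ, (if P R then (1 : ℝ) else 0)
      = 𝔼 x : ι → V, 𝔼 π : Equiv.Perm V, if P ((Q x).image π) then (1 : ℝ) else 0 := by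
        rw [← expect_const (univ_nonempty (α := ι → V))
          (𝔼 R ∈ powersetCard m univ, if P R then (1 : ℝ) else 0)]
        refine expect_congr rfl fun x _ => ?_
        rw [← expect_powersetCard_eq_expect_perm (fun R => if P R then (1 : ℝ) else 0), hQm]
    _ ≤ 𝔼 x : ι → V, 𝔼 π : Equiv.Perm V, if P (univ.image (π ∘ x)) then (1 : ℝ) else 0 := by
        refine expect_le_expect fun x _ => uniformProb_mono fun π _ => hP ?_
        rw [← image_image]
        exact image_subset_image (hQ x)
    _ = 𝔼 π : Equiv.Perm V, 𝔼 x : ι → V, if P (univ.image (π ∘ x)) then (1 : ℝ) else 0 :=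
        expect_comm _ _ _
    _ = 𝔼 _π : Equiv.Perm V, 𝔼 x : ι → V, if P (univ.image x) then (1 : ℝ) else 0 :=
        expect_congr rfl fun π _ =>
          Fintype.expect_equiv ((Equiv.refl ι).arrowCongr π) _ _ fun _ => rfl
    _ = 𝔼 x : ι → V, if P (univ.image x) then (1 : ℝ) else 0 := expect_const univ_nonempty _

lemma uniformProb_eq_apply {i j : ι} (hij : i ≠ j) :
    uniformProb univ (fun x : ι → V => x i = x j) = 1 / Fintype.card V := by
  rw [← Fintype.piFinset_univ, uniformProb_eq_expect,
    expect_piFinset_eval₂ (S := fun _ => univ) (fun _ => univ_nonempty) hij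
      fun a b => if a = b then 1 else 0]
  have hpoint (a : V) : 𝔼 b : V, (if a = b then (1 : ℝ) else 0) = 1 / Fintype.card V := by
    rw [expect_eq_sum_div_card, sum_ite_eq, if_pos (mem_univ a), card_univ]
  simp only [hpoint]
  exact expect_const univ_nonempty _

lemma uniformProb_not_injective_le :
    uniformProb univ (fun x : ι → V => ¬ x.Injective) ≤
      (Fintype.card ι : ℝ) ^ 2 / Fintype.card V := by
  calc uniformProb univ (fun x : ι → V => ¬ x.Injective)
      ≤ uniformProb univ (fun x : ι → V => ∃ z ∈ (univ : Finset ι).offDiag, x z.1 = x z.2) :=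
        uniformProb_mono fun x _ hx => by
          obtain ⟨i, j, hxij, hij⟩ := Function.not_injective_iff.1 hx
          exact ⟨(i, j), mem_offDiag.2 ⟨mem_univ _, mem_univ _, hij⟩, hxij⟩
    _ ≤ ∑ z ∈ (univ : Finset ι).offDiag, uniformProb univ (fun x : ι → V => x z.1 = x z.2) :=
        uniformProb_exists_le _ _
    _ = #((univ : Finset ι).offDiag) / Fintype.card V := by
        rw [sum_congr rfl fun z hz => uniformProb_eq_apply (mem_offDiag.1 hz).2.2, sum_const,
          nsmul_eq_mul, mul_one_div]
    _ ≤ (Fintype.card ι : ℝ) ^ 2 / Fintype.card V := by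
        gcongr
        rw [offDiag_card, card_univ, sq]
        exact_mod_cast Nat.sub_le _ _

end SubsetSampling

section Testing

variable {V κ : Type*} {G : SimpleGraph V}

lemma FamilyFree.antitone_induce (𝓕 : Set FinGraph) (G : SimpleGraph V) :
    Antitone fun Q : Finset V => FamilyFree 𝓕 (G.induce (Q : Set V)) :=
  fun _ _ hQR hR => hR.of_embedding (SimpleGraph.induceHomOfLE G (coe_subset.2 hQR))

lemma IsInducedMap.not_familyFree_induce {𝓕 : Set FinGraph} {p : FinGraph} (hp : p ∈ 𝓕)
    {y : Fin p.1 → V} (hy : IsInducedMap p.2 G y) (hinj : y.Injective) {Q : Set V}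
    (hQ : ∀ v, y v ∈ Q) : ¬ FamilyFree 𝓕 (G.induce Q) := fun hfree =>
  (hfree p hp).false ⟨⟨fun v => ⟨y v, hQ v⟩, fun _ _ h => hinj (congrArg Subtype.val h)⟩, by
    intro u v
    rcases eq_or_ne u v with rfl | huv
    · exact iff_of_false (SimpleGraph.irrefl _) (SimpleGraph.irrefl _)
    · exact hy u v huv⟩

variable [Fintype V] [Nonempty V] [Fintype κ] [DecidableEq κ]

lemma inducedDensity_le_uniformProb_injective_add (H : SimpleGraph κ) (G : SimpleGraph V) :
    inducedDensity H G ≤ uniformProb univ (fun y => y.Injective ∧ IsInducedMap H G y) +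
      (Fintype.card κ : ℝ) ^ 2 / Fintype.card V := by
  refine (uniformProb_mono fun y _ hy => ?_).trans ((uniformProb_or_le _ _).trans
    (add_le_add_right uniformProb_not_injective_le _))
  exact (em y.Injective).imp (fun hinj => ⟨hinj, hy⟩) id

lemma uniformProb_forall_block (t : ℕ) (P : (κ → V) → Prop) :
    uniformProb univ (fun x : Fin t × κ → V => ∀ i, ¬ P fun v => x (i, v)) =
      (1 - uniformProb univ P) ^ t := by
  calc uniformProb univ (fun x : Fin t × κ → V => ∀ i, ¬ P fun v => x (i, v))
      = uniformProb univ (fun x : Fin t → κ → V => ∀ i, ¬ P (x i)) :=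
        Fintype.expect_equiv (Equiv.curry _ _ _) _ _ fun _ => rfl
    _ = ∏ _i : Fin t, uniformProb univ (fun y => ¬ P y) := by
        rw [← Fintype.piFinset_univ]
        exact uniformProb_piFinset_forall (fun _ => univ) fun _ y => ¬ P y
    _ = (1 - uniformProb univ P) ^ t := by
        rw [prod_const, card_univ, Fintype.card_fin, uniformProb_not univ_nonempty]

lemma uniformProb_familyFree_induce_le {𝓕 : Set FinGraph} {p : FinGraph} (hp : p ∈ 𝓕)
    {K m : ℕ} (hK : 0 < K) (hdens : (K : ℝ)⁻¹ ≤ inducedDensity p.2 G)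
    (hcard : 2 * K * p.1 ^ 2 ≤ Fintype.card V) (hm : 4 * K * p.1 ≤ m)
    (hmV : m ≤ Fintype.card V) :
    uniformProb (powersetCard m univ) (fun Q : Finset V => FamilyFree 𝓕 (G.induce (Q : Set V))) ≤
      1 / 4 := by
  set ρ : ℝ := uniformProb univ (fun y => y.Injective ∧ IsInducedMap p.2 G y) with hρ
  have hV : (0 : ℝ) < Fintype.card V := by exact_mod_cast Fintype.card_pos
  have hρK : 1 ≤ ((2 * K : ℕ) : ℝ) * ρ := by
    have hcollision : ((2 * K : ℕ) : ℝ) * ((p.1 : ℝ) ^ 2 / Fintype.card V) ≤ 1 := by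
      rw [mul_div_assoc', div_le_one hV]
      exact_mod_cast hcard
    have hsum := inducedDensity_le_uniformProb_injective_add p.2 G
    rw [Fintype.card_fin, ← hρ] at hsum
    calc (1 : ℝ) = ((2 * K : ℕ) : ℝ) * (K : ℝ)⁻¹ - 1 := by push_cast; field_simp; norm_num
      _ ≤ ((2 * K : ℕ) : ℝ) * (ρ + (p.1 : ℝ) ^ 2 / Fintype.card V) - 1 := by
          gcongr
          exact hdens.trans hsum
      _ ≤ ((2 * K : ℕ) : ℝ) * ρ := by rw [mul_add]; linarith
  calc uniformProb (powersetCard m univ) (fun Q : Finset V => FamilyFree 𝓕 (G.induce (Q : Set V)))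
      ≤ uniformProb univ (fun x : Fin (2 * K * 2) × Fin p.1 → V =>
          FamilyFree 𝓕 (G.induce ((univ.image x : Finset V) : Set V))) := by
        refine uniformProb_powersetCard_le_of_antitone (FamilyFree.antitone_induce 𝓕 G) ?_ hmV
        rw [Fintype.card_prod, Fintype.card_fin, Fintype.card_fin]
        linarith
    _ ≤ uniformProb univ (fun x : Fin (2 * K * 2) × Fin p.1 → V => ∀ i,
          ¬ ((fun v => x (i, v)).Injective ∧ IsInducedMap p.2 G fun v => x (i, v))) :=
        uniformProb_mono fun x _ hfree i hcopy =>
          hcopy.2.not_familyFree_induce hp hcopy.1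
            (fun v => mem_image_of_mem x (mem_univ (i, v))) hfree
    _ = (1 - ρ) ^ (2 * K * 2) :=
        uniformProb_forall_block _ fun y => y.Injective ∧ IsInducedMap p.2 G y
    _ ≤ (1 / 2) ^ 2 := one_sub_pow_mul_le uniformProb_le_one hρK 2
    _ = 1 / 4 := by norm_num

end Testing

section EasilyTestable

lemma exists_inducedOn_notMem_iff (𝓕 : Set FinGraph) {n m : ℕ} (G : SimpleGraph (Fin n))
    {Q : Finset (Fin n)} (hQ : #Q = m) :
    (∃ h : #Q = m, inducedOn G Q h ∉ InducedFree 𝓕 m) ↔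
      ¬ FamilyFree 𝓕 (G.induce (Q : Set (Fin n))) := by
  let e : inducedOn G Q hQ ≃g G.induce (Q : Set (Fin n)) :=
    .comap (Q.orderIsoOfFin hQ).toEquiv (G.induce (Q : Set (Fin n)))
  rw [exists_prop_of_true hQ]
  exact not_congr ⟨fun h => FamilyFree.of_embedding h e.symm.toEmbedding,
    fun h => FamilyFree.of_embedding h e.toEmbedding⟩

lemma one_sub_mul_card_le_card_inducedOn_notMem {𝓕 : Set FinGraph} {n m : ℕ} (hmn : m ≤ n)
    {G : SimpleGraph (Fin n)} {δ : ℝ}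
    (hfree : uniformProb (powersetCard m univ)
      (fun Q : Finset (Fin n) => FamilyFree 𝓕 (G.induce (Q : Set (Fin n)))) ≤ δ) :
    (1 - δ) * #(powersetCard m (univ : Finset (Fin n))) ≤
      #{Q ∈ powersetCard m univ | ∃ h : #Q = m, inducedOn G Q h ∉ InducedFree 𝓕 m} := by
  have hne : (powersetCard m (univ : Finset (Fin n))).Nonempty :=
    powersetCard_nonempty.2 (by rwa [card_univ, Fintype.card_fin])
  rw [filter_congr fun Q hQ => exists_inducedOn_notMem_iff 𝓕 G (mem_powersetCard.1 hQ).2,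
    ← le_div_iff₀ (by exact_mod_cast hne.card_pos), ← uniformProb_eq_div_card,
    uniformProb_not hne]
  exact sub_le_sub_left hfree 1

lemma exists_pow_le_rpow_neg (C : ℕ) {ε : ℝ} (hε : 0 < ε) (hε' : ε < 1 / 2) :
    ∃ q : ℕ, 2 ≤ q ∧ 1 ≤ q * ε ∧ (q : ℝ) ^ C ≤ ε ^ (-((2 * C : ℕ) : ℝ)) := by
  have hinv : 2 < 1 / ε := by rw [lt_div_iff₀ hε]; linarith
  have hceil : 1 / ε ≤ (⌈1 / ε⌉₊ : ℝ) := Nat.le_ceil _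
  have hsq : (⌈1 / ε⌉₊ : ℝ) ≤ (1 / ε) ^ 2 := by
    have := Nat.ceil_lt_add_one (by positivity : 0 ≤ 1 / ε)
    nlinarith
  refine ⟨⌈1 / ε⌉₊, by exact_mod_cast (hinv.trans_le hceil).le, (div_le_iff₀ hε).1 hceil, ?_⟩
  rw [Real.rpow_neg hε.le, Real.rpow_natCast, ← inv_pow, pow_mul, ← one_div]
  exact pow_le_pow_left₀ (Nat.cast_nonneg _) hsq C

lemma Far.pow_two_le_mul_card_editPairs {𝓕 : Set FinGraph} {n q : ℕ} {ε : ℝ}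
    {G H : SimpleGraph (Fin n)} (hG : Far (InducedFree 𝓕) G ε) (hq : 1 ≤ q * ε)
    (hH : FamilyFree 𝓕 H) : n ^ 2 ≤ q * #(editPairs G H) := by
  have hle : (n : ℝ) ^ 2 ≤ q * #(editPairs G H) :=
    calc (n : ℝ) ^ 2 ≤ q * ε * (n : ℝ) ^ 2 := le_mul_of_one_le_left (sq_nonneg _) hq
      _ = q * (ε * (n : ℝ) ^ 2) := mul_assoc _ _ _
      _ ≤ q * (editDist G H : ℝ) := by gcongr; exact hG H hH
      _ ≤ q * #(editPairs G H) := by gcongr; exact editDist_le_card_editPairs G H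
  exact_mod_cast hle

lemma HasPolynomialRemoval.exists_uniformProb_familyFree_le {𝓕 : Finset FinGraph}
    (h𝓕 : HasPolynomialRemoval.{0} 𝓕) :
    ∃ D, ∀ q ≥ (2 : ℕ), ∀ (ε : ℝ) (m n : ℕ) (G : SimpleGraph (Fin n)), 1 ≤ q * ε →
      q ^ D ≤ m → m ≤ n → Far (InducedFree (𝓕 : Set FinGraph)) G ε →
      uniformProb (powersetCard m univ) (fun Q : Finset (Fin n) =>
        FamilyFree (𝓕 : Set FinGraph) (G.induce (Q : Set (Fin n)))) ≤ 1 / 4 := by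
  obtain ⟨C, hC⟩ := h𝓕
  let k : ℕ := 𝓕.sup Sigma.fst
  obtain ⟨D, hD⟩ : PolyBounded fun q => (q ^ C + 2 * q ^ C * k ^ 2) + 4 * q ^ C * k :=
    ((PolyBounded.pow_const C).add (((PolyBounded.const 2).mul (.pow_const C)).mul (.const _))).add
      (((PolyBounded.const 4).mul (.pow_const C)).mul (.const k))
  refine ⟨D, fun q hq ε m n G hqε hqm hmn hfar => ?_⟩
  have hsize : (q ^ C + 2 * q ^ C * k ^ 2) + 4 * q ^ C * k ≤ m := (hD q hq).trans hqm
  have hqC : 0 < q ^ C := by positivity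
  have : Nonempty (Fin n) := ⟨⟨0, by omega⟩⟩
  obtain ⟨p, hp, hdens⟩ : ∃ p ∈ 𝓕, ((q : ℝ) ^ C)⁻¹ < inducedDensity p.2 G := by
    by_contra! hrare
    obtain ⟨H, hH, hclose⟩ := hC q hq (Fin n) G (by rw [Fintype.card_fin]; omega) hrare
    rw [Fintype.card_fin] at hclose
    exact (hfar.pow_two_le_mul_card_editPairs hqε hH).not_gt hclose
  have hpk : p.1 ≤ k := le_sup (f := Sigma.fst) hp
  have hsq : 2 * q ^ C * p.1 ^ 2 ≤ 2 * q ^ C * k ^ 2 := by gcongr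
  have hlin : 4 * q ^ C * p.1 ≤ 4 * q ^ C * k := by gcongr
  apply uniformProb_familyFree_induce_le (mem_coe.2 hp) hqC
  · rw [Nat.cast_pow]
    exact hdens.le
  · rw [Fintype.card_fin]
    omega
  · omega
  · rwa [Fintype.card_fin]

lemma HasPolynomialRemoval.easilyTestable {𝓕 : Finset FinGraph}
    (h𝓕 : HasPolynomialRemoval.{0} 𝓕) : EasilyTestable (InducedFree (𝓕 : Set FinGraph)) := by
  obtain ⟨D, hD⟩ := h𝓕.exists_uniformProb_familyFree_le
  refine ⟨((2 * (D + 1) : ℕ) : ℝ), by positivity, fun ε hε hε' n G hn hfar => ?_⟩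
  obtain ⟨q, hq, hqε, hpow⟩ := exists_pow_le_rpow_neg (D + 1) hε hε'
  have hqm : q ^ (D + 1) ≤ ⌈ε ^ (-((2 * (D + 1) : ℕ) : ℝ))⌉₊ := by
    exact_mod_cast hpow.trans (Nat.le_ceil _)
  have hmn : ⌈ε ^ (-((2 * (D + 1) : ℕ) : ℝ))⌉₊ ≤ n := Nat.ceil_le.2 hn
  have hfree := hD q hq ε _ n G hqε ((Nat.pow_le_pow_right (by omega) D.le_succ).trans hqm) hmn
    hfar
  refine le_trans ?_ (one_sub_mul_card_le_card_inducedOn_notMem hmn hfree)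
  gcongr
  norm_num

end EasilyTestable

/-- If a finite family of graphs contains a bipartite graph, a co-bipartite
graph and a split graph, then the property of being induced `𝓕`-free is easily testable. -/
theorem easily_testable_of_bip_cobip_split
    (𝓕 : Set (Σ k : ℕ, SimpleGraph (Fin k))) (hfin : 𝓕.Finite)
    (hbip : ∃ p ∈ 𝓕, IsBipGraph p.2)
    (hcobip : ∃ p ∈ 𝓕, IsCoBipGraph p.2)
    (hsplit : ∃ p ∈ 𝓕, IsSplitGraph p.2) :
    EasilyTestable (InducedFree 𝓕) := by
  obtain ⟨𝓕, rfl⟩ := hfin.exists_finset_coe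
  have hk : ∀ p ∈ 𝓕, p.1 ≤ 𝓕.sup Sigma.fst := fun _ hp => le_sup (f := Sigma.fst) hp
  obtain ⟨d, hd⟩ := exists_hasPolynomialTraces hk (exists_mem_adj_iff_of_mem hbip hcobip hsplit)
  exact (hd.hasPolynomialRemoval hk).easilyTestable

end
end

section
/- There exist a bipartite graph F₁ and a co-bipartite graph F₂ such that the property P*_{F₁,F₂} of being induced {F₁,F₂}-free is not easily testable. -/
open scoped Classical
open Finset

noncomputable section

/-! The bipartite graph `F₁` contains a hexagon `v₀ ⋯ v₅`, and `F₂` is the wheel `K_{2,2,1}`. The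
graph `G` that is hard to test has a part consisting of many numbers over every vertex of `F₁`; the
parts over one side of `F₁` are cliques, those over the other side are independent. A copy of `F₁`
is planted on the terms of each arithmetic progression of length eight whose difference lies in a
set `S`. Two planted copies share at most one vertex, so making `G` induced `F₁`-free takes one
change for each of them, and a dense `S` makes `G` far from the property.

The cliques prevent the wheel, and since the vertices on their side of `F₁` have four independent
neighbours, more than there are cliques, every induced copy of `F₁` in `G` takes one vertex from
each of the parts over the hexagon. Around the hexagon such a copy gives a relation `s₁ + ⋯ + s₅ =
5 t` between elements of `S`. Behrend's construction provides sets `S` in which this has only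
trivial solutions and for which `ε` is larger than every fixed power of `1 / n`. Then a rejecting
sample contains the three-term arithmetic progression on `v₀`, `v₁`, `v₂`. There are at most
quadratically many of those, so samples of size polynomial in `1 / ε` rarely reject. -/

section MeanFree

variable {M N : Type*} [AddCommMonoid M] [AddCommMonoid N] {m : ℕ}

/-- A set is `m`-mean-free if no element of it is a nontrivial average of `m` elements of it, that
is, if `v₁ + ⋯ + vₘ = m w` has only constant solutions in it. Being `2`-mean-free is being free of
three-term arithmetic progressions. -/
def IsMeanFree (m : ℕ) (S : Set M) : Prop :=
  ∀ v : Fin m → M, (∀ i, v i ∈ S) → ∀ w ∈ S, ∑ i, v i = m • w → ∀ i, v i = w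

theorem IsMeanFree.mono {S T : Set M} (hT : IsMeanFree m T) (hST : S ⊆ T) : IsMeanFree m S :=
  fun v hv w hw => hT v (fun i => hST (hv i)) w (hST hw)

theorem IsMeanFree.preimage {S : Set N} (hS : IsMeanFree m S) {f : M →+ N}
    (hf : Function.Injective f) : IsMeanFree m (f ⁻¹' S) := by
  intro v hv w hw h i
  refine hf (hS (f ∘ v) hv (f w) hw ?_ i)
  simpa only [map_sum, map_nsmul, Function.comp_apply] using congrArg f h

theorem IsMeanFree.image {S B : Set M} (hS : IsMeanFree m S) {f : M →+ N} (hf : B.InjOn f)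
    (hB : ∀ v : Fin m → M, (∀ i, v i ∈ S) → ∑ i, v i ∈ B) : IsMeanFree m (f '' S) := by
  rintro u hu _ ⟨w, hw, rfl⟩ h i
  choose v hv hfv using hu
  obtain rfl : (fun i => f (v i)) = u := funext hfv
  have hw_mem : m • w ∈ B := by simpa using hB (fun _ => w) fun _ => hw
  have hsum : ∑ i, v i = m • w := hf (hB v hv) hw_mem (by simpa only [map_sum, map_nsmul] using h)
  exact congrArg f (hS v hv w hw hsum i)

/-- If `w` is the mean of the `vᵢ`, then `∑ ‖vᵢ - w‖² = ∑ ‖vᵢ‖² - m ‖w‖²`, which vanishes on a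
sphere. -/
theorem isMeanFree_metricSphere {E : Type*} [NormedAddCommGroup E] [InnerProductSpace ℝ E]
    (m : ℕ) (r : ℝ) : IsMeanFree m (Metric.sphere (0 : E) r) := by
  intro v hv w hw h i
  simp only [mem_sphere_zero_iff_norm] at hv hw
  have hinner : ∑ i, inner ℝ (v i) w = m * r ^ 2 := by
    rw [← sum_inner, h, ← Nat.cast_smul_eq_nsmul ℝ, real_inner_smul_left,
      real_inner_self_eq_norm_sq, hw]
  have hzero : ∑ i, ‖v i - w‖ ^ 2 = 0 := by
    simp only [norm_sub_sq_real, hv, hw, sum_add_distrib, sum_sub_distrib, ← mul_sum, hinner,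
      sum_const, card_univ, Fintype.card_fin, nsmul_eq_mul]
    ring
  have := (sum_eq_zero_iff_of_nonneg fun i _ => sq_nonneg ‖v i - w‖).1 hzero i (mem_univ i)
  simpa [sub_eq_zero] using this

theorem isMeanFree_behrendSphere (m n d k : ℕ) :
    IsMeanFree m (Behrend.sphere n d k : Set (Fin n → ℕ)) := by
  let f : (Fin n → ℕ) →+ EuclideanSpace ℝ (Fin n) :=
    { toFun := fun x => WithLp.toLp 2 ((↑) ∘ x)
      map_zero' := PiLp.ext fun _ => Nat.cast_zero
      map_add' := fun _ _ => PiLp.ext fun _ => Nat.cast_add _ _ }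
  have hf : Function.Injective f :=
    (WithLp.toLp_injective 2).comp Nat.cast_injective.comp_left
  exact ((isMeanFree_metricSphere m _).preimage hf).mono
    Behrend.sphere_subset_preimage_metric_sphere

theorem behrendMap_lt_pow {n D : ℕ} {x : Fin n → ℕ} (hx : ∀ i, x i < D) :
    Behrend.map D x < D ^ n := by
  simpa [finFunctionFinEquiv_apply] using (finFunctionFinEquiv fun i => (⟨x i, hx i⟩ : Fin D)).isLt

theorem exists_isMeanFree_subset_range {m n d : ℕ} (hm : 0 < m) (hn : 0 < n) (hd : 0 < d) :
    ∃ S ⊆ range ((m * d) ^ n), IsMeanFree m (S : Set ℕ) ∧ d ^ n ≤ #S * (n * d ^ 2) := by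
  obtain ⟨k, hk⟩ := Behrend.exists_large_sphere n d
  have hlt : ∀ v ∈ Behrend.sphere n d k, ∀ i, v i < d := fun v hv =>
    Behrend.mem_box.1 (Behrend.sphere_subset_box hv)
  have hle : d ≤ m * d := Nat.le_mul_of_pos_left d hm
  have hinj : Set.InjOn (Behrend.map (m * d)) {x : Fin n → ℕ | ∀ i, x i < m * d} :=
    Behrend.map_injOn
  refine ⟨(Behrend.sphere n d k).image (Behrend.map (m * d)), ?_, ?_, ?_⟩
  · refine image_subset_iff.2 fun v hv => mem_range.2 ?_
    exact behrendMap_lt_pow fun i => (hlt v hv i).trans_le hle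
  · rw [coe_image]
    refine (isMeanFree_behrendSphere m n d k).image hinj fun v hv j => ?_
    have : Nonempty (Fin m) := ⟨⟨0, hm⟩⟩
    calc (∑ i, v i) j = ∑ i, v i j := Finset.sum_apply j univ v
      _ < ∑ _i : Fin m, d := sum_lt_sum_of_nonempty univ_nonempty fun i _ => hlt _ (hv i) j
      _ = m * d := by simp
  · rw [card_image_of_injOn (hinj.mono fun v hv i => (hlt v hv i).trans_le hle)]
    rw [div_le_iff₀ (by positivity)] at hk
    exact_mod_cast hk

/-- Take the set of `exists_isMeanFree_subset_range` in dimension `2 r + 1`, with `d` so large that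
the loss `(n d²) ^ r` in the density costs less than the range `d ^ (2 r + 1)`. -/
theorem exists_isMeanFree_dense {m : ℕ} (hm : 0 < m) (C r : ℕ) :
    ∃ M > 0, ∃ S ⊆ range M, S.Nonempty ∧ IsMeanFree m (S : Set ℕ) ∧
      (C * M) ^ r ≤ M * #S ^ r := by
  set n := 2 * r + 1
  set K := C * m ^ n * n
  set d := K ^ r + 1
  obtain ⟨S, hSM, hS, hcard⟩ :=
    exists_isMeanFree_subset_range hm (by lia : 0 < n) (by lia : 0 < d)
  refine ⟨(m * d) ^ n, by positivity, S, hSM, ?_, hS, ?_⟩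
  · have : 0 < #S * (n * d ^ 2) := hcard.trans_lt' (by positivity)
    exact card_pos.1 (Nat.pos_of_mul_pos_right this)
  · calc (C * (m * d) ^ n) ^ r = (C * m ^ n * d ^ n) ^ r := by rw [mul_pow m, mul_assoc]
      _ ≤ (C * m ^ n * (#S * (n * d ^ 2))) ^ r := by gcongr
      _ = K ^ r * d ^ (2 * r) * #S ^ r := by simp only [K]; rw [pow_mul, ← mul_pow, ← mul_pow]; ring
      _ ≤ d * d ^ (2 * r) * #S ^ r := by gcongr; lia
      _ = d ^ n * #S ^ r := by simp only [n]; ring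
      _ ≤ (m * d) ^ n * #S ^ r := by gcongr; exact Nat.le_mul_of_pos_left d hm

end MeanFree

section Sampling

variable {n q : ℕ}

/-- If `H` is induced `F`-free, it differs from `G` inside every copy of `F`, and copies meeting in
at most one vertex are destroyed by changes at different pairs. -/
theorem card_le_editDist {V ι : Type*} [Fintype ι] {F : SimpleGraph V}
    {G H : SimpleGraph (Fin n)} (ψ : ι → F ↪g G)
    (hψ : Pairwise fun p p' => (Set.range (ψ p) ∩ Set.range (ψ p')).Subsingleton)
    (hH : IsEmpty (F ↪g H)) : Fintype.card ι ≤ editDist G H := by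
  have hdiff : ∀ p, ∃ u v, u ≠ v ∧ ¬(G.Adj (ψ p u) (ψ p v) ↔ H.Adj (ψ p u) (ψ p v)) := by
    intro p
    by_contra! hagree
    refine hH.false ⟨(ψ p).toEmbedding, fun {u v} => ?_⟩
    rcases eq_or_ne u v with rfl | huv
    · simp
    · exact (hagree u v huv).symm.trans (ψ p).map_adj_iff
  choose u v huv hne using hdiff
  have hinj : Function.Injective fun p => s(ψ p (u p), ψ p (v p)) := by
    intro p p' (h : s(ψ p (u p), ψ p (v p)) = s(ψ p' (u p'), ψ p' (v p')))
    by_contra hpp'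
    have hrange : ∀ x ∈ s(ψ p (u p), ψ p (v p)), x ∈ Set.range (ψ p') := by
      intro x hx
      rcases Sym2.mem_iff.1 (h ▸ hx) with rfl | rfl <;> exact Set.mem_range_self _
    have heq := hψ hpp' ⟨⟨_, rfl⟩, hrange _ (Sym2.mem_mk_left _ _)⟩
      ⟨⟨_, rfl⟩, hrange _ (Sym2.mem_mk_right _ _)⟩
    exact huv p ((ψ p).injective heq)
  rw [← Nat.card_eq_fintype_card, ← Set.ncard_univ]
  refine Set.ncard_le_ncard_of_injOn _ (fun p _ => ?_) hinj.injOn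
  simp only [Set.mem_ofPred_eq, SimpleGraph.mem_edgeSet]
  have := hne p
  tauto

/-- The `q`-element vertex subsets of `G` inducing a subgraph without property `P`, on which the
tester of `EasilyTestable` rejects. -/
def rejectingSamples (P : ∀ n : ℕ, Set (SimpleGraph (Fin n))) (G : SimpleGraph (Fin n)) (q : ℕ) :
    Finset (Finset (Fin n)) :=
  (univ.powersetCard q).filter fun Q => ∃ h : Q.card = q, inducedOn G Q h ∉ P q

theorem exists_embedding_of_mem_rejectingSamples {𝓕 : Set (Σ k : ℕ, SimpleGraph (Fin k))}
    {G : SimpleGraph (Fin n)} {Q : Finset (Fin n)}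
    (hQ : Q ∈ rejectingSamples (InducedFree 𝓕) G q) :
    ∃ p ∈ 𝓕, ∃ φ : p.2 ↪g G, ∀ v, φ v ∈ Q := by
  obtain ⟨-, hcard, hrej⟩ := mem_filter.1 hQ
  obtain ⟨p, hp, ⟨φ⟩⟩ : ∃ p ∈ 𝓕, Nonempty (p.2 ↪g inducedOn G Q hcard) := by
    simpa [InducedFree] using hrej
  let θ : inducedOn G Q hcard ↪g G :=
    SimpleGraph.Embedding.comap
      ((Q.orderIsoOfFin hcard).toEquiv.toEmbedding.trans (Function.Embedding.subtype _)) G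
  exact ⟨p, hp, φ.trans θ, fun v => (Q.orderIsoOfFin hcard (φ v)).2⟩

theorem card_filter_powersetCard_superset_mul_descFactorial {α : Type*} {s t : Finset α}
    (hst : s ⊆ t) (q : ℕ) :
    #{u ∈ t.powersetCard q | s ⊆ u} * (#t).descFactorial #s =
      (#t).choose q * q.descFactorial #s := by
  rcases le_or_gt #s q with hsq | hqs
  · rw [card_filter_powersetCard_subset s t q hst hsq, Nat.descFactorial_eq_factorial_mul_choose,
      Nat.descFactorial_eq_factorial_mul_choose, mul_left_comm, mul_left_comm ((#t).choose q),
      Nat.choose_mul hsq, mul_comm ((#t).choose #s)]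
  · have hempty : {u ∈ t.powersetCard q | s ⊆ u} = ∅ := filter_eq_empty_iff.2 fun u hu hsu =>
      (card_le_card hsu).not_gt ((mem_powersetCard.1 hu).2 ▸ hqs)
    rw [hempty, card_empty, zero_mul, Nat.descFactorial_of_lt hqs, mul_zero]

theorem card_mul_descFactorial_le_of_forall_exists_subset {α ι : Type*} [Fintype α] {t : ℕ}
    {𝒬 : Finset (Finset α)} {I : Finset ι} {T : ι → Finset α} (h𝒬 : 𝒬 ⊆ univ.powersetCard q)
    (hT : ∀ i ∈ I, #(T i) = t) (hcover : ∀ Q ∈ 𝒬, ∃ i ∈ I, T i ⊆ Q) :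
    #𝒬 * (Fintype.card α).descFactorial t ≤ #I * ((Fintype.card α).choose q * q ^ t) := by
  let samplesAbove (i : ι) : Finset (Finset α) := {Q ∈ univ.powersetCard q | T i ⊆ Q}
  have hsub : 𝒬 ⊆ I.biUnion samplesAbove := fun Q hQ =>
    let ⟨i, hi, hTQ⟩ := hcover Q hQ
    mem_biUnion.2 ⟨i, hi, mem_filter.2 ⟨h𝒬 hQ, hTQ⟩⟩
  calc #𝒬 * (Fintype.card α).descFactorial t
      ≤ (∑ i ∈ I, #(samplesAbove i)) * (Fintype.card α).descFactorial t :=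
        Nat.mul_le_mul_right _ ((card_le_card hsub).trans card_biUnion_le)
    _ = ∑ _i ∈ I, (Fintype.card α).choose q * q.descFactorial t := by
        rw [sum_mul]
        refine sum_congr rfl fun i hi => ?_
        have := card_filter_powersetCard_superset_mul_descFactorial (subset_univ (T i)) q
        rwa [hT i hi] at this
    _ = #I * ((Fintype.card α).choose q * q.descFactorial t) := by rw [sum_const, smul_eq_mul]
    _ ≤ #I * ((Fintype.card α).choose q * q ^ t) := by
        gcongr; exact Nat.descFactorial_le_pow q t

theorem not_easilyTestable_of_forall_exists {P : ∀ n : ℕ, Set (SimpleGraph (Fin n))}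
    (h : ∀ r : ℕ, ∃ ε : ℝ, 0 < ε ∧ ε < 1 / 2 ∧ ∃ (n : ℕ) (G : SimpleGraph (Fin n)), Far P G ε ∧
      ∀ q : ℕ, (q : ℝ) ≤ 2 * ε⁻¹ ^ r → 3 * #(rejectingSamples P G q) < 2 * n.choose q) :
    ¬EasilyTestable P := by
  rintro ⟨c, -, htest⟩
  obtain ⟨r, hcr⟩ := exists_nat_ge c
  obtain ⟨ε, hε₀, hε₁, n, G, hfar, hsmall⟩ := h r
  have hinv : 1 ≤ ε⁻¹ := (one_le_inv₀ hε₀).2 (by linarith)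
  have hpow : ε ^ (-c) ≤ ε⁻¹ ^ r := by
    rw [Real.rpow_neg hε₀.le, ← Real.inv_rpow hε₀.le, ← Real.rpow_natCast]
    exact Real.rpow_le_rpow_of_exponent_le hinv hcr
  have hceil : (⌈ε ^ (-c)⌉₊ : ℝ) ≤ 2 * ε⁻¹ ^ r := by
    calc (⌈ε ^ (-c)⌉₊ : ℝ) ≤ ⌈ε⁻¹ ^ r⌉₊ := by gcongr
      _ ≤ 2 * ε⁻¹ ^ r := Nat.ceil_le_two_mul (by linarith [one_le_pow₀ hinv (n := r)])
  have hlt := hsmall _ hceil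
  have hn : ε ^ (-c) ≤ n := by
    refine Nat.ceil_le.1 (not_lt.1 fun hn => ?_)
    rw [Nat.choose_eq_zero_of_lt hn] at hlt
    lia
  have hge := htest ε hε₀ hε₁ n G hn hfar
  rw [card_powersetCard, card_univ, Fintype.card_fin] at hge
  change _ ≤ (#(rejectingSamples P G ⌈ε ^ (-c)⌉₊) : ℝ) at hge
  have hlt' : (3 : ℝ) * #(rejectingSamples P G ⌈ε ^ (-c)⌉₊) < 2 * n.choose ⌈ε ^ (-c)⌉₊ := by
    exact_mod_cast hlt
  linarith

end Sampling

section Wheel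

open SimpleGraph

theorem isCoBipGraph_turanGraph {n r : ℕ} (h : n ≤ 2 * r) :
    IsCoBipGraph (turanGraph n r) := by
  refine ⟨{v | (v : ℕ) < r}, ?_, ?_⟩ <;> intro u hu v hv huv hmod <;>
    simp only [Set.mem_ofPred_eq, not_lt] at hu hv <;>
    refine huv (Fin.ext (Nat.ModEq.eq_of_abs_lt hmod ?_)) <;>
    rw [abs_lt] <;> lia

/-- The graph `turanGraph 5 3` is the wheel `K_{2,2,1}`. Every vertex cover of it contains an
induced path on three vertices, whereas `A` is a vertex cover inducing disjoint cliques. -/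
theorem isEmpty_turanGraph_five_three_embedding {V : Type*} {G : SimpleGraph V} {A : Set V}
    (hind : ∀ u ∉ A, ∀ v ∉ A, ¬G.Adj u v)
    (htrans : ∀ u ∈ A, ∀ v ∈ A, ∀ w ∈ A, u ≠ w → G.Adj u v → G.Adj v w → G.Adj u w) :
    IsEmpty (turanGraph 5 3 ↪g G) := by
  refine ⟨fun φ => ?_⟩
  have hadj {u v : Fin 5} : G.Adj (φ u) (φ v) ↔ (u : ℕ) % 3 ≠ v % 3 := φ.map_adj_iff
  have hmem (u v : Fin 5) (huv : (u : ℕ) % 3 ≠ v % 3) (hu : φ u ∉ A) : φ v ∈ A := by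
    by_contra hv
    exact hind _ hu _ hv (hadj.2 huv)
  have hpath (u v w : Fin 5) (huw : u ≠ w) (huv : (u : ℕ) % 3 ≠ v % 3)
      (hmod : (u : ℕ) % 3 = w % 3) (hu : φ u ∈ A) (hv : φ v ∈ A) (hw : φ w ∈ A) : False :=
    hadj.1 (htrans _ hu _ hv _ hw (φ.injective.ne huw) (hadj.2 huv) (hadj.2 (hmod ▸ huv.symm))) hmod
  by_cases h2 : φ 2 ∈ A
  · by_cases h0 : φ 0 ∈ A
    · by_cases h3 : φ 3 ∈ A
      · exact hpath 0 2 3 (by decide) (by decide) rfl h0 h2 h3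
      · exact hpath 1 2 4 (by decide) (by decide) rfl (hmem 3 1 (by decide) h3) h2
          (hmem 3 4 (by decide) h3)
    · exact hpath 1 2 4 (by decide) (by decide) rfl (hmem 0 1 (by decide) h0) h2
        (hmem 0 4 (by decide) h0)
  · exact hpath 0 1 3 (by decide) (by decide) rfl (hmem 2 0 (by decide) h2)
      (hmem 2 1 (by decide) h2) (hmem 2 3 (by decide) h2)

end Wheel

section Bipartite

open Sum

variable {ι β : Type*}

/-- The bipartite graph with sides `ι` and `β` whose edges are the pairs in the relation `r`. -/
def bipartiteOfRel (r : ι → β → Prop) : SimpleGraph (ι ⊕ β) where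
  Adj
    | inl i, inr b => r i b
    | inr b, inl i => r i b
    | inl _, inl _ => False
    | inr _, inr _ => False
  symm := ⟨by rintro (_ | _) (_ | _) h <;> exact h⟩
  loopless := ⟨by rintro (_ | _) h <;> exact h⟩

theorem isBipGraph_bipartiteOfRel (r : ι → β → Prop) : IsBipGraph (bipartiteOfRel r) := by
  refine ⟨Set.range inl, ?_, ?_⟩
  · rintro _ ⟨i, rfl⟩ _ ⟨j, rfl⟩ h
    exact h
  · rintro (i | b) hu (j | c) hv h
    exacts [h, hu ⟨i, rfl⟩, hv ⟨j, rfl⟩, h]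

theorem IsBipGraph.of_embedding {V W : Type*} {G : SimpleGraph V} {H : SimpleGraph W}
    (hH : IsBipGraph H) (φ : G ↪g H) : IsBipGraph G := by
  obtain ⟨A, hA, hA'⟩ := hH
  refine ⟨φ ⁻¹' A, fun u hu v hv h => ?_, fun u hu v hv h => ?_⟩
  · exact hA _ hu _ hv (φ.map_adj_iff.2 h)
  · exact hA' _ hu _ hv (φ.map_adj_iff.2 h)

end Bipartite

section CliqueBlowup

open Sum

variable {ι β X : Type*}

/-- The graph obtained from an empty graph on `ι ⊕ β` by replacing every vertex by a copy of `X`,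
a clique for the vertices in `ι` and an independent set for those in `β`, and joining the copies of
`i : ι` and `b : β` along the relation `R i b`. -/
def cliqueBlowup (R : ι → β → X → X → Prop) : SimpleGraph ((ι ⊕ β) × X) where
  Adj
    | (inl i, x), (inl j, y) => i = j ∧ x ≠ y
    | (inl i, x), (inr b, y) => R i b x y
    | (inr b, y), (inl i, x) => R i b x y
    | (inr _, _), (inr _, _) => False
  symm := ⟨by
    rintro ⟨_ | _, _⟩ ⟨_ | _, _⟩ h
    exacts [⟨h.1.symm, h.2.symm⟩, h, h, h]⟩
  loopless := ⟨by
    rintro ⟨_ | _, _⟩ h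
    exacts [h.2 rfl, h]⟩

theorem isEmpty_turanGraph_five_three_embedding_cliqueBlowup (R : ι → β → X → X → Prop) :
    IsEmpty (SimpleGraph.turanGraph 5 3 ↪g cliqueBlowup R) := by
  refine isEmpty_turanGraph_five_three_embedding (A := {p | p.1.isLeft}) ?_ ?_
  · rintro ⟨i | b, x⟩ hu ⟨j | c, y⟩ hv h
    exacts [hu rfl, hu rfl, hv rfl, h]
  · rintro ⟨i | b, x⟩ hu ⟨j | c, y⟩ hv ⟨k | d, z⟩ hw hne huv hvw
    case inl.inl.inl =>
      obtain rfl : i = j := huv.1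
      obtain rfl : i = k := hvw.1
      exact ⟨rfl, fun h => hne (Prod.ext rfl h)⟩
    all_goals simp at hu hv hw

/-- A vertex of an independent part sees only the `ι` cliques, and an independent set takes at most
one vertex of each. -/
theorem exists_eq_inl_of_card_lt [Fintype ι] {V : Type*} {F : SimpleGraph V}
    {R : ι → β → X → X → Prop} (φ : F ↪g cliqueBlowup R) {v : V} {T : Finset V}
    (hcard : Fintype.card ι < #T) (hadj : ∀ w ∈ T, F.Adj v w)
    (hind : ∀ w ∈ T, ∀ w' ∈ T, ¬F.Adj w w') : ∃ i x, φ v = (inl i, x) := by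
  rcases hv : φ v with ⟨i | b, x⟩
  · exact ⟨i, x, rfl⟩
  have hpart : ∀ w ∈ T, ∃ i, inl i = (φ w).1 := by
    intro w hw
    have hvw : (cliqueBlowup R).Adj (φ v) (φ w) := φ.map_adj_iff.2 (hadj w hw)
    rw [hv] at hvw
    rcases hφw : φ w with ⟨i | c, y⟩
    · exact ⟨i, rfl⟩
    · rw [hφw] at hvw
      exact hvw.elim
  obtain ⟨w, hw, w', hw', hne, heq⟩ := exists_ne_map_eq_of_card_lt_of_maps_to
    (f := fun w => (φ w).1) (t := univ.map .inl) (by simpa using hcard)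
    fun w hw => let ⟨i, hi⟩ := hpart w hw; mem_map.2 ⟨i, mem_univ i, hi⟩
  obtain ⟨i, hi⟩ := hpart w hw
  refine (hind w hw w' hw' (φ.map_adj_iff.1 ?_)).elim
  rw [← Prod.mk.eta (p := φ w), ← Prod.mk.eta (p := φ w'), ← heq, ← hi]
  exact ⟨rfl, fun h => hne (φ.injective (Prod.ext heq h))⟩

end CliqueBlowup

section Crown

open Sum

variable {ι τ X : Type*}

/-- The crown graph on two copies of `ι`, in which `i` is adjacent to `j` if `i ≠ j`, together with
vertices `τ` adjacent to all of the first copy. -/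
def crown (ι τ : Type*) : SimpleGraph (ι ⊕ (ι ⊕ τ)) :=
  bipartiteOfRel fun i => Sum.elim (i ≠ ·) fun _ => True

/-- The clique blowup of `crown ι τ` in which the two ends of an edge `i j` of the crown are joined
along `r i j`, and the parts of `τ` are joined completely. -/
def crownBlowup (r : ι → ι → X → X → Prop) (τ : Type*) : SimpleGraph ((ι ⊕ (ι ⊕ τ)) × X) :=
  cliqueBlowup fun i b x y => Sum.elim (fun j => i ≠ j ∧ r i j x y) (fun _ => True) b

/-- The copy of `crown ι τ` in `crownBlowup r τ` that selects the vertex `f v` in every part `v`. -/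
def crownSection {r : ι → ι → X → X → Prop} (f : ι ⊕ (ι ⊕ τ) → X)
    (hf : ∀ i j, i ≠ j → r i j (f (inl i)) (f (inr (inl j)))) : crown ι τ ↪g crownBlowup r τ where
  toFun v := (v, f v)
  inj' _ _ h := congrArg Prod.fst h
  map_rel_iff' {u v} := by
    have hcross (i j : ι) : i ≠ j ∧ r i j (f (inl i)) (f (inr (inl j))) ↔ i ≠ j :=
      and_iff_left_of_imp (hf i j)
    rcases u with i | i | s <;> rcases v with j | j | t
    case inl.inl => exact ⟨fun h => h.2 (congrArg (f ∘ inl) h.1), False.elim⟩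
    case inl.inr.inl => exact hcross i j
    case inr.inl.inl => exact hcross j i
    all_goals exact Iff.rfl

variable {r : ι → ι → X → X → Prop}

theorem exists_bijective_map_inl_eq [Finite ι] [Fintype τ] (hτ : 2 ≤ Fintype.card τ)
    (φ : crown ι τ ↪g crownBlowup r τ) :
    ∃ σ : ι → ι, Function.Bijective σ ∧ ∃ x : ι → X, ∀ i, φ (inl i) = (inl (σ i), x i) := by
  have := Fintype.ofFinite ι
  have hclique (i : ι) : ∃ k x, φ (inl i) = (inl k, x) := by
    refine exists_eq_inl_of_card_lt φ (T := (univ.erase (inl i)).map .inr) ?_ ?_ ?_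
    · rw [card_map, card_erase_of_mem (mem_univ _), card_univ, Fintype.card_sum]
      lia
    · simp only [mem_map, mem_erase, Function.Embedding.inr_apply]
      rintro _ ⟨j | t, ⟨hne, -⟩, rfl⟩
      · exact fun h => hne (congrArg inl h.symm)
      · trivial
    · simp only [mem_map, Function.Embedding.inr_apply]
      rintro _ ⟨_, -, rfl⟩ _ ⟨_, -, rfl⟩ h
      exact h
  choose σ x hσ using hclique
  refine ⟨σ, Finite.injective_iff_bijective.1 fun i j hij => ?_, x, hσ⟩
  by_contra hne
  have hadj : (crownBlowup r τ).Adj (φ (inl i)) (φ (inl j)) := by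
    have hφ := φ.injective.ne (inl_injective.ne hne)
    rw [hσ, hσ, hij] at hφ ⊢
    exact ⟨rfl, fun h => hφ (congrArg _ h)⟩
  exact φ.map_adj_iff.1 hadj

theorem exists_map_inr_inl_eq [Fintype ι] (hι : 3 ≤ Fintype.card ι)
    (φ : crown ι τ ↪g crownBlowup r τ) {σ : ι → ι}
    (hσ : Function.Bijective σ) {x : ι → X} (hx : ∀ i, φ (inl i) = (inl (σ i), x i)) (j : ι) :
    ∃ y, φ (inr (inl j)) = (inr (inl (σ j)), y) := by
  have hadj (i : ι) : (crownBlowup r τ).Adj (inl (σ i), x i) (φ (inr (inl j))) ↔ i ≠ j := by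
    rw [← hx, φ.map_adj_iff]
    rfl
  rcases hj : φ (inr (inl j)) with ⟨k | k | t, y⟩ <;> simp only [hj] at hadj
  · obtain ⟨i, hi, i', hi', hne⟩ : ∃ i ∈ univ.erase j, ∃ i' ∈ univ.erase j, i ≠ i' :=
      one_lt_card.1 (by rw [card_erase_of_mem (mem_univ j), card_univ]; lia)
    have hpart := ((hadj i).2 (ne_of_mem_erase hi)).1
    have hpart' := ((hadj i').2 (ne_of_mem_erase hi')).1
    exact (hne (hσ.injective (hpart.trans hpart'.symm))).elim
  · obtain ⟨i, rfl⟩ := hσ.surjective k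
    obtain rfl : i = j := by
      by_contra hij
      exact ((hadj i).2 hij).1 rfl
    exact ⟨y, rfl⟩
  · exact ((hadj j).1 trivial rfl).elim

theorem exists_crownSection_of_embedding [Fintype ι] [Fintype τ]
    (hι : 3 ≤ Fintype.card ι) (hτ : 2 ≤ Fintype.card τ) (φ : crown ι τ ↪g crownBlowup r τ) :
    ∃ x y : ι → X, (∀ i, (inl i, x i) ∈ Set.range φ) ∧ (∀ j, (inr (inl j), y j) ∈ Set.range φ) ∧
      ∀ i j, i ≠ j → r i j (x i) (y j) := by
  obtain ⟨σ, hσ, x, hx⟩ := exists_bijective_map_inl_eq hτ φ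
  choose y hy using exists_map_inr_inl_eq hι φ hσ hx
  obtain ⟨ρ, -, hρ⟩ := Function.bijective_iff_has_inverse.1 hσ
  refine ⟨x ∘ ρ, y ∘ ρ, fun i => ⟨inl (ρ i), ?_⟩, fun j => ⟨inr (inl (ρ j)), ?_⟩,
    fun i j hij => ?_⟩
  · rw [hx, hρ i, Function.comp_apply]
  · rw [hy, hρ j, Function.comp_apply]
  · have hne : ρ i ≠ ρ j := hρ.injective.ne hij
    have hadj : (crownBlowup r τ).Adj (φ (inl (ρ i))) (φ (inr (inl (ρ j)))) :=
      φ.map_adj_iff.2 hne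
    rw [hx, hy, hρ i, hρ j] at hadj
    exact hadj.2

end Crown

section ProgressionBlowup

open Sum SimpleGraph

/-- The positions, in an arithmetic progression, of the vertices of a planted copy of
`crown (Fin 3) (Fin 2)`. The vertices of the hexagon `crown (Fin 3) (Fin 0)` take the positions
`0, …, 5` in cyclic order. -/
def slot : Fin 3 ⊕ (Fin 3 ⊕ Fin 2) → ℕ :=
  Sum.elim ![0, 2, 4] (Sum.elim ![3, 5, 1] ![6, 7])

theorem slot_injective : Function.Injective slot := by
  decide

theorem slot_le (v : Fin 3 ⊕ (Fin 3 ⊕ Fin 2)) : slot v ≤ 7 := by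
  revert v
  decide

/-- The clique blowup of `crown (Fin 3) (Fin 2)` with parts `Fin W` in which `x` and `y`, in parts
`u` and `v` adjacent in the hexagon, are adjacent if they are the terms with indices `slot u` and
`slot v` of an arithmetic progression with difference in `S`. -/
def progressionBlowup (S : Set ℕ) (W : ℕ) : SimpleGraph ((Fin 3 ⊕ (Fin 3 ⊕ Fin 2)) × Fin W) :=
  crownBlowup
    (fun i j (x y : Fin W) => ∃ s ∈ S, (y : ℕ) + slot (inl i) * s = x + slot (inr (inl j)) * s)
    (Fin 2)

/-- The copy of `crown (Fin 3) (Fin 2)` in `progressionBlowup S W` formed by the arithmetic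
progression with first term `x` and difference `s`. -/
def progressionCopy {S : Set ℕ} {W x s : ℕ} (hs : s ∈ S) (hW : x + 7 * s < W) :
    crown (Fin 3) (Fin 2) ↪g progressionBlowup S W :=
  crownSection (fun v => ⟨x + slot v * s, (by gcongr; exact slot_le v : _ ≤ _).trans_lt hW⟩)
    fun _ _ _ => ⟨s, hs, add_right_comm _ _ _⟩

theorem eq_and_eq_of_add_mul_eq {a b x x' s s' : ℕ} (hab : a ≠ b)
    (ha : x + a * s = x' + a * s') (hb : x + b * s = x' + b * s') : x = x' ∧ s = s' := by
  have hs : s = s' := by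
    zify at hab ha hb ⊢
    refine mul_left_cancel₀ (sub_ne_zero.2 hab) ?_
    linear_combination ha - hb
  subst hs
  exact ⟨Nat.add_right_cancel ha, rfl⟩

theorem subsingleton_range_progressionCopy_inter {S : Set ℕ} {W x s x' s' : ℕ} (hs : s ∈ S)
    (hW : x + 7 * s < W) (hs' : s' ∈ S) (hW' : x' + 7 * s' < W) (hne : ¬(x = x' ∧ s = s')) :
    (Set.range (progressionCopy hs hW) ∩ Set.range (progressionCopy hs' hW')).Subsingleton := by
  have hmem : ∀ p ∈ Set.range (progressionCopy hs hW) ∩ Set.range (progressionCopy hs' hW'),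
      x + slot p.1 * s = x' + slot p.1 * s' ∧ (p.2 : ℕ) = x + slot p.1 * s := by
    rintro _ ⟨⟨v, rfl⟩, ⟨v', h⟩⟩
    obtain rfl : v' = v := congrArg Prod.fst h
    exact ⟨(congrArg (fun p => (p.2 : ℕ)) h).symm, rfl⟩
  intro p hp p' hp'
  obtain ⟨heq, hval⟩ := hmem p hp
  obtain ⟨heq', hval'⟩ := hmem p' hp'
  have hpart : p.1 = p'.1 := by
    by_contra hpart
    exact hne (eq_and_eq_of_add_mul_eq (slot_injective.ne hpart) heq heq')
  exact Prod.ext hpart (Fin.ext (by rw [hval, hval', hpart]))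

/-- Walking around the hexagon of the crown, the differences of the progressions on the five edges
between consecutive slots add up to five times the difference on the edge closing the cycle. -/
theorem exists_add_eq_two_mul_of_embedding {S : Set ℕ} {W : ℕ} (hS : IsMeanFree 5 S)
    (φ : crown (Fin 3) (Fin 2) ↪g progressionBlowup S W) :
    ∃ x y z : Fin W, (x : ℕ) + z = 2 * y ∧ (inl 0, x) ∈ Set.range φ ∧
      (inr (inl 2), y) ∈ Set.range φ ∧ (inl 1, z) ∈ Set.range φ := by
  obtain ⟨x, y, hx, hy, hxy⟩ := exists_crownSection_of_embedding (by simp) (by simp) φ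
  obtain ⟨s₀, hs₀, h₀⟩ := hxy 0 2 (by decide)
  obtain ⟨s₁, hs₁, h₁⟩ := hxy 1 2 (by decide)
  obtain ⟨s₂, hs₂, h₂⟩ := hxy 1 0 (by decide)
  obtain ⟨s₃, hs₃, h₃⟩ := hxy 2 0 (by decide)
  obtain ⟨s₄, hs₄, h₄⟩ := hxy 2 1 (by decide)
  obtain ⟨t, ht, h₅⟩ := hxy 0 1 (by decide)
  simp only [slot, elim_inl, elim_inr, Matrix.cons_val] at h₀ h₁ h₂ h₃ h₄ h₅
  have hcycle : ∑ k, ![s₀, s₁, s₂, s₃, s₄] k = 5 • t := by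
    simp only [Fin.sum_univ_five, Matrix.cons_val, smul_eq_mul]
    lia
  have hconst := hS ![s₀, s₁, s₂, s₃, s₄] (by simp [Fin.forall_fin_succ, *]) t ht hcycle
  have hs₀t : s₀ = t := hconst 0
  have hs₁t : s₁ = t := hconst 1
  exact ⟨x 0, y 2, x 1, by lia, hx 0, hy 2, hx 1⟩

end ProgressionBlowup

section Testing

open Sum SimpleGraph

/-- The graph `crown (Fin 3) (Fin 2)` on the vertex set `Fin 8`, as `InducedFree` requires. -/
def forbiddenCrown : SimpleGraph (Fin 8) :=
  (crown (Fin 3) (Fin 2)).overFin (by simp)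

/-- The relabelling that defines `forbiddenCrown`. -/
def crownIso : crown (Fin 3) (Fin 2) ≃g forbiddenCrown :=
  overFinIso _ _

/-- The two forbidden induced subgraphs: a bipartite graph and the co-bipartite wheel
`K_{2,2,1}`. -/
def forbiddenPair : Set (Σ k : ℕ, SimpleGraph (Fin k)) :=
  {⟨8, forbiddenCrown⟩, ⟨5, turanGraph 5 3⟩}

/-- The graph `progressionBlowup S W` on the vertex set `Fin (8 * W)`, as `Far` requires. -/
def progressionGraph (S : Set ℕ) (W : ℕ) : SimpleGraph (Fin (8 * W)) :=
  (progressionBlowup S W).overFin (by simp)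

/-- The relabelling that defines `progressionGraph S W`. -/
def progressionGraphIso (S : Set ℕ) (W : ℕ) : progressionBlowup S W ≃g progressionGraph S W :=
  overFinIso _ _

/-- The vertices `x`, `y` and `z` in the parts of `progressionGraph S W` with slots `0`, `1`
and `2`. -/
def hexagonTriple (S : Set ℕ) {W : ℕ} (x y z : Fin W) : Finset (Fin (8 * W)) :=
  ({(inl 0, x), (inr (inl 2), y), (inl 1, z)} : Finset _).map
    (progressionGraphIso S W).toEquiv.toEmbedding

theorem card_hexagonTriple (S : Set ℕ) {W : ℕ} (x y z : Fin W) : #(hexagonTriple S x y z) = 3 := by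
  rw [hexagonTriple, card_map]
  exact card_eq_three.2 ⟨_, _, _, by simp, by simp, by simp, rfl⟩

theorem card_mul_card_le_editDist {S : Finset ℕ} {M : ℕ} (hS : S ⊆ range M)
    {H : SimpleGraph (Fin (8 * (8 * M)))} (hH : IsEmpty (forbiddenCrown ↪g H)) :
    M * #S ≤ editDist (progressionGraph S (8 * M)) H := by
  have hW (x : Fin M) (s : S) : (x : ℕ) + 7 * s < 8 * M := by
    have := mem_range.1 (hS s.2)
    lia
  let ψ (p : Fin M × S) : crown (Fin 3) (Fin 2) ↪g progressionGraph S (8 * M) :=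
    (progressionCopy p.2.2 (hW p.1 p.2)).trans (progressionGraphIso S _).toEmbedding
  have hψ : Pairwise fun p p' => (Set.range (ψ p) ∩ Set.range (ψ p')).Subsingleton := by
    intro p p' hne
    have hcopies := subsingleton_range_progressionCopy_inter p.2.2 (hW p.1 p.2) p'.2.2
      (hW p'.1 p'.2) fun h => hne (Prod.ext (Fin.ext h.1) (Subtype.ext h.2))
    have hrange (p) : Set.range (ψ p) =
        progressionGraphIso S _ '' Set.range (progressionCopy p.2.2 (hW p.1 p.2)) :=
      Set.range_comp (progressionGraphIso S _) (progressionCopy p.2.2 (hW p.1 p.2))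
    rw [hrange, hrange, ← Set.image_inter (progressionGraphIso S _).injective]
    exact hcopies.image _
  have hcrown : IsEmpty (crown (Fin 3) (Fin 2) ↪g H) :=
    ⟨fun φ => hH.false (crownIso.symm.toEmbedding.trans φ)⟩
  simpa using card_le_editDist ψ hψ hcrown

theorem exists_hexagonTriple_subset_of_mem_rejectingSamples {S : Set ℕ} {W q : ℕ}
    (hS : IsMeanFree 5 S) {Q : Finset (Fin (8 * W))}
    (hQ : Q ∈ rejectingSamples (InducedFree forbiddenPair) (progressionGraph S W) q) :
    ∃ x y z : Fin W, (x : ℕ) + z = 2 * y ∧ hexagonTriple S x y z ⊆ Q := by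
  obtain ⟨_, rfl | rfl, φ, hφ⟩ := exists_embedding_of_mem_rejectingSamples hQ
  · let e := progressionGraphIso S W
    let φ' := (crownIso.toEmbedding.trans φ).trans e.symm.toEmbedding
    have hφ' : ∀ p ∈ Set.range φ', e p ∈ Q := by
      rintro _ ⟨v, rfl⟩
      simpa [φ'] using hφ (crownIso v)
    obtain ⟨x, y, z, hsum, hx, hy, hz⟩ := exists_add_eq_two_mul_of_embedding hS φ'
    refine ⟨x, y, z, hsum, fun w hw => ?_⟩
    obtain ⟨p, hp, rfl⟩ := mem_map.1 hw
    simp only [mem_insert, mem_singleton] at hp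
    rcases hp with rfl | rfl | rfl
    exacts [hφ' _ hx, hφ' _ hy, hφ' _ hz]
  · exact ((isEmpty_turanGraph_five_three_embedding_cliqueBlowup _).false
      (φ.trans (progressionGraphIso S W).symm.toEmbedding)).elim

theorem card_filter_add_eq_two_mul_le (W : ℕ) :
    #{t : Fin W × Fin W × Fin W | (t.1 : ℕ) + t.2.2 = 2 * t.2.1} ≤ W ^ 2 := by
  calc #{t : Fin W × Fin W × Fin W | (t.1 : ℕ) + t.2.2 = 2 * t.2.1}
      ≤ #(univ : Finset (Fin W × Fin W)) := by
        refine card_le_card_of_injOn (fun t => (t.1, t.2.1)) (fun _ _ => mem_univ _) ?_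
        rintro ⟨x, y, z⟩ h ⟨x', y', z'⟩ h' heq
        obtain ⟨rfl, rfl⟩ := Prod.mk.inj heq
        simp only [coe_filter, mem_univ, true_and, Set.mem_ofPred_eq] at h h'
        obtain rfl : z = z' := Fin.ext (by lia)
        rfl
    _ = W ^ 2 := by simp [sq]

theorem three_mul_card_rejectingSamples_lt {S : Set ℕ} {W q : ℕ} (hS : IsMeanFree 5 S)
    (hW : 0 < W) (hq : q ^ 3 ≤ W) :
    3 * #(rejectingSamples (InducedFree forbiddenPair) (progressionGraph S W) q) <
      2 * (8 * W).choose q := by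
  set 𝒬 := rejectingSamples (InducedFree forbiddenPair) (progressionGraph S W) q
  set I : Finset (Fin W × Fin W × Fin W) := {t | (t.1 : ℕ) + t.2.2 = 2 * t.2.1}
  have hcount : #𝒬 * (8 * W).descFactorial 3 ≤ #I * ((8 * W).choose q * q ^ 3) := by
    have hcover : ∀ Q ∈ 𝒬, ∃ t ∈ I, hexagonTriple S t.1 t.2.1 t.2.2 ⊆ Q := fun Q hQ =>
      let ⟨x, y, z, hsum, hsub⟩ := exists_hexagonTriple_subset_of_mem_rejectingSamples hS hQ
      ⟨(x, y, z), mem_filter.2 ⟨mem_univ _, hsum⟩, hsub⟩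
    simpa only [Fintype.card_fin] using card_mul_descFactorial_le_of_forall_exists_subset
      (𝒬 := 𝒬) (filter_subset _ _) (fun _ _ => card_hexagonTriple S _ _ _) hcover
  have hdesc : (6 * W) ^ 3 ≤ (8 * W).descFactorial 3 :=
    calc (6 * W) ^ 3 ≤ (8 * W + 1 - 3) ^ 3 := by gcongr; lia
      _ ≤ (8 * W).descFactorial 3 := Nat.pow_sub_le_descFactorial _ _
  have hle : 216 * #𝒬 ≤ (8 * W).choose q := by
    refine Nat.le_of_mul_le_mul_right ?_ (pow_pos hW 3)
    calc 216 * #𝒬 * W ^ 3 = #𝒬 * (6 * W) ^ 3 := by ring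
      _ ≤ #𝒬 * (8 * W).descFactorial 3 := by gcongr
      _ ≤ W ^ 2 * ((8 * W).choose q * W) := by
        grw [hcount, card_filter_add_eq_two_mul_le W, hq]
      _ = (8 * W).choose q * W ^ 3 := by ring
  have hqW : q ≤ W := (Nat.le_self_pow three_ne_zero q).trans hq
  have hchoose : 0 < (8 * W).choose q := Nat.choose_pos (by lia)
  lia

/-- The edit distance is at least `M * #S = ε n ^ 2`, where `n = 8 * (8 * M)` and `ε` is
`#S / (4096 * M)`. -/
theorem not_easilyTestable_inducedFree_forbiddenPair :
    ¬EasilyTestable (InducedFree forbiddenPair) := by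
  refine not_easilyTestable_of_forall_exists fun r => ?_
  obtain ⟨M, hM, S, hSM, hne, hS, hdense⟩ := exists_isMeanFree_dense (m := 5) (by simp)
    4096 (3 * r)
  have hcardM : #S ≤ M := by simpa using card_le_card hSM
  have hM' : (0 : ℝ) < M := by exact_mod_cast hM
  refine ⟨#S / (4096 * M), by positivity, ?_, 8 * (8 * M), progressionGraph S (8 * M), ?_, ?_⟩
  · rw [div_lt_iff₀ (by positivity)]
    have : (#S : ℝ) ≤ M := by exact_mod_cast hcardM
    linarith
  · intro H hH
    calc (#S / (4096 * M) * (8 * (8 * M) : ℕ) ^ 2 : ℝ) = (M * #S : ℕ) := by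
          push_cast
          field_simp
          norm_num
      _ ≤ editDist (progressionGraph S (8 * M)) H := by
          exact_mod_cast card_mul_card_le_editDist hSM (hH ⟨8, forbiddenCrown⟩ (Or.inl rfl))
  · intro q hq
    refine three_mul_card_rejectingSamples_lt hS (by lia) ?_
    have hq_cube : (q ^ 3 : ℝ) ≤ 8 * M := by
      calc (q ^ 3 : ℝ) ≤ (2 * (#S / (4096 * M) : ℝ)⁻¹ ^ r) ^ 3 := by gcongr
        _ = 8 * ((4096 * M : ℝ) ^ (3 * r) / #S ^ (3 * r)) := by
          rw [inv_div, mul_pow, ← pow_mul, mul_comm r, div_pow]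
          norm_num
        _ ≤ 8 * M := by
          gcongr
          rw [div_le_iff₀ (by positivity)]
          exact_mod_cast hdense
    exact_mod_cast hq_cube

end Testing

/-- There are a bipartite graph `F₁` and a co-bipartite graph `F₂` such that
being induced `{F₁, F₂}`-free is not easily testable. -/
theorem exists_bip_cobip_not_easily_testable :
    ∃ (a b : ℕ) (F₁ : SimpleGraph (Fin a)) (F₂ : SimpleGraph (Fin b)),
      IsBipGraph F₁ ∧ IsCoBipGraph F₂ ∧
      ¬ EasilyTestable (InducedFree ({⟨a, F₁⟩, ⟨b, F₂⟩} : Set (Σ k : ℕ, SimpleGraph (Fin k)))) :=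
  ⟨8, 5, forbiddenCrown, SimpleGraph.turanGraph 5 3,
    (isBipGraph_bipartiteOfRel _).of_embedding crownIso.symm.toEmbedding,
    isCoBipGraph_turanGraph (by simp), not_easilyTestable_inducedFree_forbiddenPair⟩

end
end
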